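/- There exist constants b > 0 and C > 0 such that for every positive integer k divisible by 4 and every real x ≥ 16 with log k ≤ b·√(log x), one has Σ_{p ≤ x, p prime, p ≡ 1 (mod 4)} |cos(k·θ_p)| / p ≤ (1/π)·log log x + (1 − 2/π)·log log k + C. -/

import Mathlib

namespace SACB
open Complex Metric Set

lemma factor_zeros {s0 : ℂ} {R : ℝ} (hR : 0 < R) (n : ℕ) : ∀ (B : ℝ) (G : ℂ → ℂ),
    DifferentiableOn ℂ G (ball s0 (6 * R)) → G s0 ≠ 0 →
    (∀ s ∈ closedBall s0 (5 * R), ‖G s‖ ≤ B * ‖G s0‖) → B * (2 / 3) ^ n < 1 →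
    ∃ (Z : List ℂ) (H : ℂ → ℂ), (∀ ρ ∈ Z, ρ ∈ closedBall s0 (2 * R) ∧ G ρ = 0) ∧
      DifferentiableOn ℂ H (ball s0 (6 * R)) ∧ H s0 ≠ 0 ∧
      (∀ s ∈ closedBall s0 (5 * R), ‖H s‖ ≤ B * ‖H s0‖) ∧
      (∀ s ∈ closedBall s0 (2 * R), H s ≠ 0) ∧
      ∀ s ∈ ball s0 (6 * R), G s = (Z.map (fun ρ => s - ρ)).prod * H s := by
  induction n with
  | zero =>
    intro B G hG h0 hB hlt
    exfalso
    have := hB s0 (mem_closedBall_self (by positivity))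
    have h1 : 0 < ‖G s0‖ := norm_pos_iff.mpr h0
    simp at hlt
    nlinarith
  | succ n ih =>
    intro B G hG h0 hB hlt
    by_cases hz : ∀ s ∈ closedBall s0 (2 * R), G s ≠ 0
    · exact ⟨[], G, by simp, hG, h0, hB, hz, by simp⟩
    push Not at hz
    obtain ⟨ρ, hρ, hρ0⟩ := hz
    have hGpos : 0 < ‖G s0‖ := norm_pos_iff.mpr h0
    have hBpos : 0 ≤ B := by
      have := hB s0 (mem_closedBall_self (by positivity))
      nlinarith
    have hρd : ‖s0 - ρ‖ ≤ 2 * R := by rwa [mem_closedBall, dist_comm, dist_eq_norm] at hρ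
    have hρne : s0 ≠ ρ := fun h => h0 (h ▸ hρ0)
    have hρpos : 0 < ‖s0 - ρ‖ := norm_pos_iff.mpr (sub_ne_zero.mpr hρne)
    set G1 := dslope G ρ with hG1
    have hmem : ball s0 (6 * R) ∈ nhds ρ := isOpen_ball.mem_nhds
      (closedBall_subset_ball (by linarith) hρ)
    have hG1d : DifferentiableOn ℂ G1 (ball s0 (6 * R)) :=
      (differentiableOn_dslope hmem).mpr hG
    have hfac : ∀ s, G s = (s - ρ) * G1 s := by
      intro s
      have := sub_smul_dslope G ρ s
      rw [hρ0, sub_zero] at this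
      rw [← this]; rfl
    have hG10 : G1 s0 ≠ 0 := fun h => h0 (by rw [hfac, h, mul_zero])
    have hbd : ∀ s ∈ closedBall s0 (5 * R), ‖G1 s‖ ≤ (B * (2 / 3)) * ‖G1 s0‖ := by
      intro s hs
      have hcl : closure (ball s0 (5 * R)) = closedBall s0 (5 * R) :=
        closure_ball _ (by positivity)
      refine norm_le_of_forall_mem_frontier_norm_le (U := ball s0 (5 * R)) isBounded_ball
        ⟨hG1d.mono (ball_subset_ball (by linarith)), ?_⟩ ?_ (by rwa [hcl])
      · rw [hcl]; exact hG1d.continuousOn.mono (closedBall_subset_ball (by linarith))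
      · intro z hz
        rw [frontier_ball _ (by positivity)] at hz
        have hz' : ‖z - s0‖ = 5 * R := by simpa [dist_eq_norm] using hz
        have h1 : 3 * R ≤ ‖z - ρ‖ := by
          have : ‖z - s0‖ ≤ ‖z - ρ‖ + ‖s0 - ρ‖ := by
            have e : z - s0 = (z - ρ) - (s0 - ρ) := by ring
            rw [e]; exact norm_sub_le _ _
          linarith
        have h2 := hB z (sphere_subset_closedBall hz)
        rw [hfac z, hfac s0, norm_mul, norm_mul] at h2
        have h3 : 0 < ‖G1 s0‖ := norm_pos_iff.mpr hG10
        have h4 : 3 * R * ‖G1 z‖ ≤ ‖z - ρ‖ * ‖G1 z‖ := by gcongr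
        have h5 : B * (‖s0 - ρ‖ * ‖G1 s0‖) ≤ B * (2 * R * ‖G1 s0‖) := by gcongr
        have h6 : R * (3 * ‖G1 z‖) ≤ R * (2 * (B * ‖G1 s0‖)) := by linarith
        have := le_of_mul_le_mul_left h6 hR
        linarith
    obtain ⟨Z, H, h1, h2, h3, h4, h5, h6⟩ := ih (B * (2 / 3)) G1 hG1d hG10 hbd (by
      rw [pow_succ] at hlt; linarith)
    refine ⟨ρ :: Z, H, ?_, h2, h3, ?_, h5, ?_⟩
    · intro r hr
      rcases List.mem_cons.mp hr with rfl | hr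
      · exact ⟨hρ, hρ0⟩
      · exact ⟨(h1 r hr).1, by rw [hfac, (h1 r hr).2, mul_zero]⟩
    · intro s hs
      refine (h4 s hs).trans ?_
      have : 0 ≤ ‖H s0‖ := norm_nonneg _
      nlinarith [mul_nonneg hBpos this]
    · intro s hs
      rw [hfac, h6 s hs]; simp [mul_assoc]

lemma logDeriv_bound {H : ℂ → ℂ} {s0 : ℂ} {R M : ℝ} (hR : 0 < R) (hM : 0 < M)
    (hH : DifferentiableOn ℂ H (ball s0 (2 * R))) (hne : ∀ s ∈ ball s0 (2 * R), H s ≠ 0)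
    (hb : ∀ s ∈ ball s0 (2 * R), ‖H s‖ ≤ Real.exp M * ‖H s0‖) :
    ∀ s ∈ closedBall s0 R, ‖deriv H s / H s‖ ≤ 12 * M / R := by
  have hs0 : s0 ∈ ball s0 (2 * R) := mem_ball_self (by positivity)
  have hd : DifferentiableOn ℂ (fun s => deriv H s / H s) (ball s0 (2 * R)) :=
    (hH.deriv isOpen_ball).div hH hne
  obtain ⟨L, hL0, hL⟩ := (hd.isExactOn_ball).with_val_at s0 0
  have hconst : ∀ s ∈ ball s0 (2 * R), H s = H s0 * exp (L s) := by
    have hder : ∀ s ∈ ball s0 (2 * R), HasDerivAt (fun s => H s * exp (-L s)) 0 s := by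
      intro s hs
      have h1 := (hH.differentiableAt (isOpen_ball.mem_nhds hs)).hasDerivAt
      have h2 := (hL s hs).neg.cexp
      have h3 := h1.mul h2
      have := hne s hs
      exact h3.congr_deriv (by field_simp; ring)
    have hc {x y : ℂ} := (convex_ball s0 (2 * R)).is_const_of_fderivWithin_eq_zero (𝕜 := ℂ)
      (x := x) (y := y) (f := fun s => H s * exp (-L s))
      (fun s hs => (hder s hs).differentiableAt.differentiableWithinAt) (by
        intro s hs
        rw [fderivWithin_of_isOpen isOpen_ball hs]
        ext
        simp [(hder s hs).deriv])
    intro s hs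
    have := hc hs hs0
    simp only [hL0, neg_zero, exp_zero, mul_one] at this
    rw [← this, mul_assoc, ← exp_add]; simp
  have hre : ∀ s ∈ ball s0 (2 * R), (L s).re ≤ M := by
    intro s hs
    have h1 := hb s hs
    rw [hconst s hs, norm_mul, norm_exp, mul_comm] at h1
    have h2 : 0 < ‖H s0‖ := norm_pos_iff.mpr (hne _ hs0)
    exact Real.exp_le_exp.mp (le_of_mul_le_mul_right h1 h2)
  have hLb : ∀ s ∈ closedBall s0 (3 / 2 * R), ‖L s‖ ≤ 6 * M := by
    intro s hs
    have hs' : ‖s - s0‖ ≤ 3 / 2 * R := by simpa [dist_eq_norm] using hs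
    have := Complex.borelCaratheodory_zero (f := fun z => L (s0 + z)) (M := M) (R := 2 * R)
      (z := s - s0) hM ?_ ?_ (by positivity) (by simp; linarith) (by simp [hL0])
    · simp only [add_sub_cancel] at this
      refine this.trans ?_
      rw [div_le_iff₀ (by linarith)]
      nlinarith
    · intro z hz
      have hz' : s0 + z ∈ ball s0 (2 * R) := by simpa using hz
      exact ((hL _ hz').differentiableAt.comp z (by fun_prop)).differentiableWithinAt
    · intro z hz
      exact hre _ (by simpa using hz)
  intro s hs
  have hs' : ‖s - s0‖ ≤ R := by simpa [dist_eq_norm] using hs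
  have hsb : s ∈ ball s0 (2 * R) := closedBall_subset_ball (by linarith) hs
  rw [← (hL s hsb).deriv]
  have := norm_deriv_le_of_forall_mem_sphere_norm_le (c := s) (R := R / 2) (C := 6 * M) (f := L)
    (by positivity) ?_ ?_
  · refine this.trans (le_of_eq ?_); field_simp; norm_num
  · have hsub : closedBall s (R / 2) ⊆ ball s0 (2 * R) := by
      intro z hz
      have hz' : ‖z - s‖ ≤ R / 2 := by simpa [dist_eq_norm] using hz
      have : ‖z - s0‖ ≤ ‖z - s‖ + ‖s - s0‖ := by
        have e : z - s0 = (z - s) + (s - s0) := by ring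
        rw [e]; exact norm_add_le _ _
      rw [mem_ball, dist_eq_norm]; linarith
    refine ⟨fun z hz => (hL z (hsub (ball_subset_closedBall hz))).differentiableAt.differentiableWithinAt, ?_⟩
    rw [closure_ball _ (by positivity)]
    exact fun z hz => (hL z (hsub hz)).continuousAt.continuousWithinAt
  · intro z hz
    apply hLb
    have hz' : ‖z - s‖ = R / 2 := by simpa [dist_eq_norm] using hz
    have : ‖z - s0‖ ≤ ‖z - s‖ + ‖s - s0‖ := by
      have e : z - s0 = (z - s) + (s - s0) := by ring
      rw [e]; exact norm_add_le _ _
    rw [mem_closedBall, dist_eq_norm]; linarith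

lemma hasDerivAt_prod_list (Z : List ℂ) (s : ℂ) (h : ∀ ρ ∈ Z, s - ρ ≠ 0) :
    HasDerivAt (fun s : ℂ => (Z.map (fun ρ => s - ρ)).prod)
      ((Z.map (fun ρ => s - ρ)).prod * (Z.map (fun ρ => 1 / (s - ρ))).sum) s := by
  induction Z with
  | nil => simpa using hasDerivAt_const s (1 : ℂ)
  | cons a Z ih =>
    have h1 := ih (fun ρ hρ => h ρ (List.mem_cons_of_mem _ hρ))
    have h2 : HasDerivAt (fun s : ℂ => s - a) 1 s := (hasDerivAt_id s).sub_const a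
    have h3 := h2.mul h1
    have h4 : s - a ≠ 0 := h a (List.mem_cons_self)
    simp only [List.map_cons, List.prod_cons, List.sum_cons]
    exact h3.congr_deriv (by field_simp)

/-- Landau's lemma. -/
lemma landau {G : ℂ → ℂ} {s0 : ℂ} {R M : ℝ} (hR : 0 < R) (hM : 0 < M)
    (hG : DifferentiableOn ℂ G (ball s0 (6 * R))) (h0 : G s0 ≠ 0)
    (hb : ∀ s ∈ closedBall s0 (5 * R), ‖G s‖ ≤ Real.exp M * ‖G s0‖) :
    ∃ Z : List ℂ, (∀ ρ ∈ Z, ρ ∈ closedBall s0 (2 * R) ∧ G ρ = 0) ∧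
      ∀ s ∈ closedBall s0 R, G s ≠ 0 →
        ‖deriv G s / G s - (Z.map (fun ρ => 1 / (s - ρ))).sum‖ ≤ 12 * M / R := by
  obtain ⟨n, hn⟩ := exists_pow_lt_of_lt_one (show 0 < (Real.exp M)⁻¹ by positivity)
    (show (2 / 3 : ℝ) < 1 by norm_num)
  obtain ⟨Z, H, h1, h2, h3, h4, h5, h6⟩ := factor_zeros hR n (Real.exp M) G hG h0 hb (by
    have := Real.exp_pos M
    calc Real.exp M * (2 / 3) ^ n < Real.exp M * (Real.exp M)⁻¹ := by gcongr
      _ = 1 := by field_simp)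
  refine ⟨Z, h1, fun s hs hGs => ?_⟩
  have hs6 : s ∈ ball s0 (6 * R) := closedBall_subset_ball (by linarith) hs
  have hne : ∀ ρ ∈ Z, s - ρ ≠ 0 := by
    intro ρ hρ h
    rw [sub_eq_zero] at h
    exact hGs (h ▸ (h1 ρ hρ).2)
  have hHs : H s ≠ 0 := h5 s (closedBall_subset_closedBall (by linarith) hs)
  have hP := hasDerivAt_prod_list Z s hne
  have hHd := (h2.differentiableAt (isOpen_ball.mem_nhds hs6)).hasDerivAt
  have hev : G =ᶠ[nhds s] fun s => (Z.map (fun ρ => s - ρ)).prod * H s := by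
    filter_upwards [isOpen_ball.mem_nhds hs6] with z hz using h6 z hz
  have hder := ((hP.mul hHd).congr_of_eventuallyEq hev).deriv
  have hPne : (Z.map (fun ρ => s - ρ)).prod ≠ 0 := by
    intro h; apply hGs; rw [h6 s hs6, h, zero_mul]
  have : deriv G s / G s - (Z.map (fun ρ => 1 / (s - ρ))).sum = deriv H s / H s := by
    rw [hder, h6 s hs6]
    field_simp
    ring
  rw [this]
  refine logDeriv_bound hR hM (h2.mono (ball_subset_ball (by linarith)))
    (fun z hz => h5 z (ball_subset_closedBall hz)) (fun z hz => h4 z ?_) s hs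
  exact closedBall_subset_closedBall (by linarith) (ball_subset_closedBall hz)

lemma zero_repulsion {Z : List ℂ} {K : ℝ} (hK : 4 ≤ K) (hZ : ∀ ρ ∈ Z, ρ.re ≤ 1)
    (h : ∀ u : ℝ, 0 < u → u ≤ 1 / 32 →
      (Z.map (fun ρ => (1 / (((1 + u : ℝ) : ℂ) - ρ)).re)).sum ≤ 3 / 4 / u + K) :
    ∀ u : ℝ, 0 < u → u ≤ 1 / 32 →
      (Z.map (fun ρ => (1 / (((1 + u : ℝ) : ℂ) - ρ)).re)).sum ≤ 500 * K := by
  have hform : ∀ (ρ : ℂ) (u : ℝ), (1 / (((1 + u : ℝ) : ℂ) - ρ)).re =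
      (u + (1 - ρ.re)) / ((u + (1 - ρ.re)) ^ 2 + ρ.im ^ 2) := by
    intro ρ u
    simp [Complex.inv_re, normSq_apply]
    ring
  have hnn : ∀ (ρ : ℂ) (u : ℝ), ρ.re ≤ 1 → 0 < u → 0 ≤ (1 / (((1 + u : ℝ) : ℂ) - ρ)).re := by
    intro ρ u h1 h2
    rw [hform]
    have : 0 ≤ u + (1 - ρ.re) := by linarith
    positivity
  set δ : ℝ := 1 / (160 * K) with hδ
  have hδpos : 0 < δ := by positivity
  have hδK : K * δ = 1 / 160 := by rw [hδ]; field_simp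
  have hδle : 16 * δ ≤ 1 / 32 := by nlinarith
  have hfar : ∀ ρ ∈ Z, δ ^ 2 ≤ (1 - ρ.re) ^ 2 + ρ.im ^ 2 := by
    intro ρ hρ
    by_contra hcon
    push Not at hcon
    have h1 := h (16 * δ) (by positivity) hδle
    have h2 : (1 / (((1 + 16 * δ : ℝ) : ℂ) - ρ)).re ≤
        (Z.map (fun ρ => (1 / (((1 + 16 * δ : ℝ) : ℂ) - ρ)).re)).sum := by
      apply List.single_le_sum
      · intro x hx
        obtain ⟨r, hr, rfl⟩ := List.mem_map.mp hx
        exact hnn r _ (hZ r hr) (by positivity)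
      · exact List.mem_map.mpr ⟨ρ, hρ, rfl⟩
    have h3 := h2.trans h1
    rw [hform] at h3
    have ha : 0 ≤ 1 - ρ.re := by linarith [hZ ρ hρ]
    set a := 1 - ρ.re
    set b := ρ.im
    have hale : a ≤ δ := by nlinarith [sq_nonneg b]
    have hden : (16 * δ + a) ^ 2 + b ^ 2 ≤ 289 * δ ^ 2 := by nlinarith
    have h4 : 16 * δ / (289 * δ ^ 2) ≤ (16 * δ + a) / ((16 * δ + a) ^ 2 + b ^ 2) := by
      gcongr
      linarith
    have h5 := h4.trans h3
    have h6 : 16 * δ / (289 * δ ^ 2) = 16 / 289 / δ := by field_simp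
    have h7 : 3 / 4 / (16 * δ) + K = (3 / 64 + 1 / 160) / δ := by
      rw [← hδK]; field_simp; ring
    rw [h6, h7, div_le_div_iff_of_pos_right hδpos] at h5
    norm_num at h5
  intro u hu hu'
  by_cases hc : δ ≤ u
  · refine (h u hu hu').trans ?_
    have : 3 / 4 / u ≤ 3 / 4 / δ := by gcongr
    have h2 : 3 / 4 / δ = 120 * K := by rw [hδ]; field_simp; norm_num
    linarith
  push Not at hc
  have h1 : (Z.map (fun ρ => (1 / (((1 + u : ℝ) : ℂ) - ρ)).re)).sum ≤
      (Z.map (fun ρ => 4 * (1 / (((1 + δ : ℝ) : ℂ) - ρ)).re)).sum := by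
    apply List.sum_le_sum
    intro ρ hρ
    rw [hform, hform]
    have ha : 0 ≤ 1 - ρ.re := by linarith [hZ ρ hρ]
    have hf := hfar ρ hρ
    set a := 1 - ρ.re
    set b := ρ.im
    have hd1 : 0 < (u + a) ^ 2 + b ^ 2 := by positivity
    have hd2 : 0 < (δ + a) ^ 2 + b ^ 2 := by positivity
    rw [← mul_div_assoc, div_le_div_iff₀ hd1 hd2]
    have e1 : (δ + a) ^ 2 + b ^ 2 ≤ 4 * ((u + a) ^ 2 + b ^ 2) := by
      nlinarith [sq_nonneg (δ - a), sq_nonneg u, mul_nonneg hu.le ha]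
    have e2 : u + a ≤ δ + a := by linarith
    have e3 : 0 ≤ u + a := by linarith
    calc (u + a) * ((δ + a) ^ 2 + b ^ 2) ≤ (δ + a) * (4 * ((u + a) ^ 2 + b ^ 2)) := by gcongr
      _ = _ := by ring
  have h2 := h δ hδpos (by linarith)
  rw [List.sum_map_mul_left] at h1
  have h3 : 3 / 4 / δ = 120 * K := by rw [hδ]; field_simp; norm_num
  linarith

end SACB
namespace SACB
open Complex Metric Set

/-- real-valued norm -/
noncomputable def nm (α : GaussianInt) : ℝ := ((α.norm : ℤ) : ℝ)

lemma nm_eq (α : GaussianInt) : nm α = ‖(α : ℂ)‖ ^ 2 := by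
  rw [nm, GaussianInt.intCast_real_norm, Complex.normSq_eq_norm_sq]

lemma nm_mul (α β : GaussianInt) : nm (α * β) = nm α * nm β := by
  simp [nm_eq, mul_pow]

lemma nm_one_le {α : GaussianInt} (h : α ≠ 0) : 1 ≤ nm α := by
  have := GaussianInt.norm_pos.mpr h
  unfold nm
  exact_mod_cast this

lemma nm_pos {α : GaussianInt} (h : α ≠ 0) : 0 < nm α := lt_of_lt_of_le one_pos (nm_one_le h)

lemma nm_nonneg (α : GaussianInt) : 0 ≤ nm α := by rw [nm_eq]; positivity

lemma nm_zero : nm 0 = 0 := by simp [nm]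

lemma nm_coord (α : GaussianInt) : nm α = (α.re : ℝ) ^ 2 + (α.im : ℝ) ^ 2 := by
  simp [nm, Zsqrtd.norm_def]; ring

lemma log_nm_nonneg (α : GaussianInt) : 0 ≤ Real.log (nm α) := by
  by_cases h : α = 0
  · simp [h, nm_zero]
  · exact Real.log_nonneg (nm_one_le h)

/-- coordinates -/
def giEquiv : GaussianInt ≃ (Fin 2 → ℤ) where
  toFun α := ![α.re, α.im]
  invFun v := ⟨v 0, v 1⟩
  left_inv α := by cases α; rfl
  right_inv v := by ext i; fin_cases i <;> rfl

lemma summable_nm {σ : ℝ} (hσ : 1 < σ) : Summable fun α : GaussianInt => nm α ^ (-σ) := by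
  have h := (giEquiv.summable_iff).mpr
    (EisensteinSeries.summable_one_div_norm_rpow (k := 2 * σ) (by linarith))
  refine Summable.of_nonneg_of_le (fun α => Real.rpow_nonneg (nm_nonneg α) _) (fun α => ?_) h
  by_cases h0 : α = 0
  · subst h0
    rw [nm_zero, Real.zero_rpow (by linarith)]
    simp only [Function.comp]
    positivity
  simp only [Function.comp]
  have h1 : ‖giEquiv α‖ ^ 2 ≤ nm α := by
    rw [nm_coord]
    have : ‖giEquiv α‖ ≤ Real.sqrt ((α.re : ℝ) ^ 2 + (α.im : ℝ) ^ 2) := by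
      rw [pi_norm_le_iff_of_nonneg (by positivity)]
      intro i
      apply Real.le_sqrt_of_sq_le
      fin_cases i
      · simp [giEquiv, Int.norm_eq_abs]; positivity
      · simp [giEquiv, Int.norm_eq_abs]; positivity
    calc _ ≤ (Real.sqrt ((α.re : ℝ) ^ 2 + (α.im : ℝ) ^ 2)) ^ 2 := by gcongr
      _ = _ := Real.sq_sqrt (by positivity)
  have h2 : 0 < ‖giEquiv α‖ := by
    rw [norm_pos_iff]
    intro h
    apply h0
    have : giEquiv α = giEquiv 0 := by rw [h]; ext i; fin_cases i <;> rfl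
    exact giEquiv.injective this
  have h3 : ‖giEquiv α‖ ^ (-(2 * σ)) = (‖giEquiv α‖ ^ 2) ^ (-σ) := by
    rw [← Real.rpow_natCast, ← Real.rpow_mul h2.le]; congr 1; push_cast; ring
  rw [h3]
  exact Real.rpow_le_rpow_of_nonpos (by positivity) h1 (by linarith)

lemma summable_log_nm {σ : ℝ} (hσ : 1 < σ) :
    Summable fun α : GaussianInt => Real.log (nm α) * nm α ^ (-σ) := by
  have h := (summable_nm (σ := (1 + σ) / 2) (by linarith)).mul_left (1 / ((σ - 1) / 2))
  refine Summable.of_nonneg_of_le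
    (fun α => mul_nonneg (log_nm_nonneg α) (Real.rpow_nonneg (nm_nonneg α) _)) (fun α => ?_) h
  by_cases h0 : α = 0
  · subst h0
    rw [nm_zero, Real.zero_rpow (by linarith), Real.zero_rpow (by linarith)]
    simp
  have h1 := Real.log_le_rpow_div (nm_nonneg α) (show 0 < (σ - 1) / 2 by linarith)
  calc Real.log (nm α) * nm α ^ (-σ) ≤ (nm α ^ ((σ - 1) / 2) / ((σ - 1) / 2)) * nm α ^ (-σ) := by
        have := Real.rpow_nonneg (nm_nonneg α) (-σ)
        gcongr
    _ = 1 / ((σ - 1) / 2) * (nm α ^ ((σ - 1) / 2) * nm α ^ (-σ)) := by ring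
    _ = _ := by
      rw [← Real.rpow_add (nm_pos h0)]; congr 2; ring

/-- the Hecke character times norm power -/
noncomputable def g (l : ℕ) (s : ℂ) (α : GaussianInt) : ℂ :=
  if α = 0 then 0 else ((α : ℂ) / (‖(α : ℂ)‖ : ℂ)) ^ l * cexp (-s * (Real.log (nm α) : ℝ))

lemma g_zero (l : ℕ) (s : ℂ) : g l s 0 = 0 := by simp [g]

lemma g_ne (l : ℕ) (s : ℂ) {α : GaussianInt} (h : α ≠ 0) :
    g l s α = ((α : ℂ) / (‖(α : ℂ)‖ : ℂ)) ^ l * cexp (-s * (Real.log (nm α) : ℝ)) := by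
  simp [g, h]

lemma norm_g (l : ℕ) {s : ℂ} (hs : s.re ≠ 0) (α : GaussianInt) : ‖g l s α‖ = nm α ^ (-s.re) := by
  by_cases h : α = 0
  · subst h; rw [g_zero, nm_zero, Real.zero_rpow (by simpa using hs), norm_zero]
  rw [g_ne _ _ h, norm_mul, norm_pow, norm_div, norm_exp]
  have h1 : ‖(α : ℂ)‖ ≠ 0 := by
    rw [norm_ne_zero_iff]; simpa using h
  rw [norm_real, norm_norm, div_self h1, one_pow, one_mul, Real.rpow_def_of_pos (nm_pos h)]
  congr 1
  simp
  ring

lemma g_mul (l : ℕ) (s : ℂ) (α β : GaussianInt) : g l s (α * β) = g l s α * g l s β := by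
  by_cases h : α = 0
  · simp [h, g_zero]
  by_cases h' : β = 0
  · simp [h', g_zero]
  rw [g_ne _ _ h, g_ne _ _ h', g_ne _ _ (mul_ne_zero h h'), nm_mul,
    Real.log_mul (nm_pos h).ne' (nm_pos h').ne']
  have : cexp (-s * ((Real.log (nm α) + Real.log (nm β) : ℝ) : ℂ)) =
      cexp (-s * (Real.log (nm α) : ℝ)) * cexp (-s * (Real.log (nm β) : ℝ)) := by
    rw [← exp_add]; push_cast; ring_nf
  rw [this, GaussianInt.toComplex_mul, norm_mul]
  push_cast
  rw [mul_div_mul_comm, mul_pow]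
  ring

lemma summable_g (l : ℕ) {s : ℂ} (hs : 1 < s.re) : Summable (g l s) := by
  refine Summable.of_norm ?_
  simp_rw [norm_g l (show s.re ≠ 0 by linarith)]
  exact summable_nm hs

noncomputable def F (l : ℕ) (s : ℂ) : ℂ := ∑' α, g l s α

lemma differentiable_g (l : ℕ) (α : GaussianInt) : Differentiable ℂ (fun s => g l s α) := by
  unfold g
  split_ifs
  · fun_prop
  · fun_prop

lemma hasDerivAt_g (l : ℕ) (α : GaussianInt) (s : ℂ) :
    HasDerivAt (fun s => g l s α) (-((Real.log (nm α) : ℝ) : ℂ) * g l s α) s := by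
  by_cases h : α = 0
  · subst h; simp only [g_zero, mul_zero]; exact hasDerivAt_const _ _
  · simp only [g_ne _ _ h]
    have h1 : HasDerivAt (fun s : ℂ => -s * ((Real.log (nm α) : ℝ) : ℂ))
      (-1 * ((Real.log (nm α) : ℝ) : ℂ)) s := (hasDerivAt_id s).neg.mul_const _
    exact (h1.cexp.const_mul _).congr_deriv (by ring)

lemma hasDerivAt_F (l : ℕ) {s : ℂ} (hs : 1 < s.re) :
    HasDerivAt (F l) (-∑' α, ((Real.log (nm α) : ℝ) : ℂ) * g l s α) s := by
  set σ := (1 + s.re) / 2 with hσ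
  have hσ1 : 1 < σ := by rw [hσ]; linarith
  have hopen : IsOpen {z : ℂ | σ < z.re} := isOpen_lt continuous_const continuous_re
  have hmem : s ∈ {z : ℂ | σ < z.re} := by simp only [mem_ofPred_eq, hσ]; linarith
  have hb : ∀ (α : GaussianInt) (w : ℂ), w ∈ {z : ℂ | σ < z.re} → ‖g l w α‖ ≤ nm α ^ (-σ) := by
    intro α w hw
    simp only [mem_ofPred_eq] at hw
    rw [norm_g l (by linarith)]
    by_cases h : α = 0
    · subst h; rw [nm_zero, Real.zero_rpow (by linarith), Real.zero_rpow (by linarith)]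
    · exact Real.rpow_le_rpow_of_exponent_le (nm_one_le h) (by linarith)
  have h1 := hasSum_deriv_of_summable_norm (summable_nm hσ1)
    (fun α => (differentiable_g l α).differentiableOn) hopen hb hmem
  have h2 := differentiableOn_tsum_of_summable_norm (summable_nm hσ1)
    (fun α => (differentiable_g l α).differentiableOn) hopen hb
  have h3 := (h2.differentiableAt (hopen.mem_nhds hmem)).hasDerivAt
  refine h3.congr_deriv ?_
  rw [← h1.tsum_eq, ← tsum_neg]
  refine tsum_congr fun α => ?_
  rw [(hasDerivAt_g l α s).deriv, neg_mul]

end SACB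
namespace SACB
open Complex Metric Set

/-- the multiplier -/
def bt (l : ℕ) : GaussianInt := ⟨(l : ℤ), 1⟩

lemma nm_bt (l : ℕ) : nm (bt l) = ((l ^ 2 + 1 : ℕ) : ℝ) := by
  rw [nm_coord]; simp [bt]

lemma bt_ne (l : ℕ) : bt l ≠ 0 := by
  intro h
  have := congrArg Zsqrtd.im h
  simp [bt] at this

lemma bt_bij (l : ℕ) : Function.Bijective
    (fun x : GaussianInt × Fin (l ^ 2 + 1) => bt l * x.1 + ((x.2 : ℕ) : GaussianInt)) := by
  have hN : (0 : ℤ) < (l : ℤ) ^ 2 + 1 := by positivity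
  constructor
  · rintro ⟨⟨x, y⟩, r⟩ ⟨⟨x', y'⟩, r'⟩ h
    have h1 := congrArg Zsqrtd.re h
    have h2 := congrArg Zsqrtd.im h
    simp [bt] at h1 h2
    have hr : ((r : ℕ) : ℤ) < (l : ℤ) ^ 2 + 1 := by exact_mod_cast r.2
    have hr' : ((r' : ℕ) : ℤ) < (l : ℤ) ^ 2 + 1 := by exact_mod_cast r'.2
    have h3 : ((l : ℤ) ^ 2 + 1) * (y' - y) = ((r' : ℕ) : ℤ) - ((r : ℕ) : ℤ) := by
      have e1 : x = x' + (l : ℤ) * y' - l * y := by linarith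
      rw [e1] at h1
      linarith
    have hy : y' - y = 0 := by
      by_contra hne
      rcases lt_or_gt_of_ne hne with hlt | hgt
      · have : y' - y ≤ -1 := by omega
        nlinarith
      · have : 1 ≤ y' - y := by omega
        nlinarith
    have hyy : y = y' := by linarith
    subst hyy
    have hxx : x = x' := by linarith
    subst hxx
    have : ((r : ℕ) : ℤ) = ((r' : ℕ) : ℤ) := by linarith
    have : r = r' := Fin.ext (by exact_mod_cast this)
    rw [this]
  · rintro ⟨a, b⟩
    set N : ℤ := (l : ℤ) ^ 2 + 1 with hNd
    set q := (a - l * b) / N with hq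
    set r := (a - l * b) % N with hr
    have hqr : N * q + r = a - l * b := Int.mul_ediv_add_emod _ _
    have hr0 : 0 ≤ r := Int.emod_nonneg _ hN.ne'
    have hrN : r < N := Int.emod_lt_of_pos _ hN
    refine ⟨(⟨b + l * q, -q⟩, ⟨r.toNat, ?_⟩), ?_⟩
    · zify
      rw [Int.toNat_of_nonneg hr0]
      exact hrN
    · have hrc : (((r.toNat : ℕ) : ℤ)) = r := Int.toNat_of_nonneg hr0
      ext
      · simp [bt, hr0]
        rw [hNd] at hqr
        linarith
      · simp [bt]

noncomputable def tt (l : ℕ) (γ : GaussianInt) (s : ℂ) : ℂ :=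
  ∑ r : Fin (l ^ 2 + 1), (g l s (bt l * γ + ((r : ℕ) : GaussianInt)) - g l s (bt l * γ))

noncomputable def G (l : ℕ) (s : ℂ) : ℂ := ∑' γ, tt l γ s

lemma G_eq_aux {N : ℕ} (f : GaussianInt → ℂ) (hf : Summable f)
    (h : GaussianInt × Fin N → GaussianInt) (hb : Function.Bijective h) (c : ℂ) (b : GaussianInt)
    (hm : ∀ γ, f (b * γ) = c * f γ) :
    ∑' γ, ∑ r : Fin N, (f (h (γ, r)) - f (b * γ)) = (1 - (N : ℂ) * c) * ∑' γ, f γ := by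
  have h1 : Summable (fun x => f (h x)) := (Equiv.ofBijective h hb).summable_iff.mpr hf
  have h2 : ∑' γ, f γ = ∑' γ, ∑ r : Fin N, f (h (γ, r)) := by
    have e : ∑' x, f (h x) = ∑' γ, f γ := (Equiv.ofBijective h hb).tsum_eq f
    rw [← e, h1.tsum_prod]
    exact tsum_congr fun γ => tsum_fintype _
  have h3 : Summable (fun γ => ∑ r : Fin N, f (h (γ, r))) := by
    refine h1.prod.congr fun γ => ?_
    exact tsum_fintype _
  have h4 : Summable (fun γ => (N : ℂ) * (c * f γ)) := (hf.mul_left _).mul_left _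
  have h5 : ∀ γ, ∑ r : Fin N, (f (h (γ, r)) - f (b * γ)) =
      (∑ r : Fin N, f (h (γ, r))) - (N : ℂ) * (c * f γ) := by
    intro γ
    rw [Finset.sum_sub_distrib, hm]
    simp
  simp_rw [h5]
  rw [h3.tsum_sub h4, ← h2, tsum_mul_left, tsum_mul_left]
  ring

lemma G_eq (l : ℕ) {s : ℂ} (hs : 1 < s.re) :
    G l s = (1 - ((l ^ 2 + 1 : ℕ) : ℂ) * g l s (bt l)) * F l s :=
  G_eq_aux (g l s) (summable_g l hs) _ (bt_bij l) (g l s (bt l)) (bt l) (fun γ => g_mul l s _ _)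

lemma g_ratio (l : ℕ) (s : ℂ) {α w : GaussianInt} (hα : α ≠ 0) (hw : w ≠ 0) :
    g l s α = g l s w * cexp ((l : ℂ) * (((Complex.log ((α : ℂ) / w)).im : ℝ) * I)
      - 2 * s * ((Complex.log ((α : ℂ) / w)).re : ℝ)) := by
  have hα' : (α : ℂ) ≠ 0 := by simpa using hα
  have hw' : (w : ℂ) ≠ 0 := by simpa using hw
  set q : ℂ := (α : ℂ) / w with hq
  have hq0 : q ≠ 0 := div_ne_zero hα' hw'
  have hαq : (α : ℂ) = w * q := by rw [hq]; field_simp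
  rw [g_ne _ _ hα, g_ne _ _ hw]
  have h1 : (α : ℂ) / (‖(α : ℂ)‖ : ℂ) = ((w : ℂ) / (‖(w : ℂ)‖ : ℂ)) * cexp (((Complex.log q).im : ℝ) * I) := by
    rw [hαq, norm_mul]
    push_cast
    rw [mul_div_mul_comm]
    congr 1
    rw [Complex.log_im]
    have := Complex.norm_mul_exp_arg_mul_I q
    have hn : (‖q‖ : ℂ) ≠ 0 := by simpa using hq0
    rw [div_eq_iff hn, mul_comm]; exact this.symm
  have h2 : Real.log (nm α) = Real.log (nm w) + 2 * (Complex.log q).re := by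
    rw [nm_eq, nm_eq, hαq, norm_mul, Complex.log_re, mul_pow, Real.log_mul, Real.log_pow (n := 2) (x := ‖q‖)]
    · push_cast; ring
    · have := norm_pos_iff.mpr hw'; positivity
    · have := norm_pos_iff.mpr hq0; positivity
  rw [h1, h2, mul_pow, ← exp_nat_mul, mul_assoc, mul_assoc, ← exp_add, ← exp_add]
  congr 2
  push_cast
  ring

lemma tt_term_bound {l : ℕ} {s : ℂ} (hs : 3 / 4 ≤ s.re) (hs4 : ‖s‖ ≤ 4) {γ : GaussianInt}
    (hγ : γ ≠ 0) (r : Fin (l ^ 2 + 1)) :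
    ‖g l s (bt l * γ + ((r : ℕ) : GaussianInt)) - g l s (bt l * γ)‖ ≤
      2 * (2 * (l + 8) * (l + 1) : ℝ) ^ 3 * nm γ ^ (-(5 / 4) : ℝ) := by
  set A : ℝ := 2 * (l + 8) * (l + 1) with hA
  have hl : (0 : ℝ) ≤ l := by positivity
  have hA1 : 16 ≤ A := by rw [hA]; nlinarith
  set n : ℝ := ‖(γ : ℂ)‖ with hn
  have hnn : nm γ = n ^ 2 := nm_eq γ
  have hn1 : 1 ≤ n := by
    have := nm_one_le hγ
    rw [hnn] at this
    by_contra hc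
    push Not at hc
    have : 0 ≤ n := norm_nonneg _
    nlinarith
  have hnp : nm γ ^ (-(5 / 4) : ℝ) = n ^ (-(5 / 2) : ℝ) := by
    rw [hnn, ← Real.rpow_natCast, ← Real.rpow_mul (by linarith)]; norm_num
  have hgle : ∀ α, ‖g l s α‖ ≤ 1 := by
    intro α
    rw [norm_g l (by linarith)]
    by_cases h : α = 0
    · subst h; rw [nm_zero, Real.zero_rpow (by linarith)]; norm_num
    · exact Real.rpow_le_one_of_one_le_of_nonpos (nm_one_le h) (by linarith)
  by_cases hc : n < A
  · have h1 : ‖g l s (bt l * γ + ((r : ℕ) : GaussianInt)) - g l s (bt l * γ)‖ ≤ 2 := by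
      refine (norm_sub_le _ _).trans ?_
      linarith [hgle (bt l * γ + ((r : ℕ) : GaussianInt)), hgle (bt l * γ)]
    refine h1.trans ?_
    rw [hnp, Real.rpow_neg (by linarith)]
    have h2 : n ^ (5 / 2 : ℝ) ≤ A ^ 3 := by
      calc n ^ (5 / 2 : ℝ) ≤ n ^ (3 : ℝ) := Real.rpow_le_rpow_of_exponent_le hn1 (by norm_num)
        _ = n ^ 3 := by norm_cast
        _ ≤ A ^ 3 := by gcongr
    have h3 : 0 < n ^ (5 / 2 : ℝ) := by positivity
    have : 1 ≤ A ^ 3 * (n ^ (5 / 2 : ℝ))⁻¹ := by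
      rw [← div_eq_mul_inv, one_le_div h3]; exact h2
    linarith
  push Not at hc
  have hbn : ‖((bt l : GaussianInt) : ℂ)‖ ^ 2 = (l : ℝ) ^ 2 + 1 := by
    rw [← nm_eq, nm_bt]; push_cast; ring
  have hb1 : 1 ≤ ‖((bt l : GaussianInt) : ℂ)‖ := by
    by_contra hcc
    push Not at hcc
    nlinarith [norm_nonneg ((bt l : GaussianInt) : ℂ)]
  have hb2 : ‖((bt l : GaussianInt) : ℂ)‖ ≤ l + 1 := by
    by_contra hcc
    push Not at hcc
    nlinarith [norm_nonneg ((bt l : GaussianInt) : ℂ)]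
  have hw : bt l * γ ≠ 0 := mul_ne_zero (bt_ne l) hγ
  have hwc : ((bt l : GaussianInt) : ℂ) * (γ : ℂ) ≠ 0 := by
    rw [← GaussianInt.toComplex_mul]; simpa using hw
  set z : ℂ := ((r : ℕ) : ℂ) / (((bt l : GaussianInt) : ℂ) * (γ : ℂ)) with hz
  have hzb : ‖z‖ ≤ (l + 1) / n := by
    rw [hz, norm_div, norm_mul, ← hn, norm_natCast, div_le_div_iff₀ (by positivity) (by positivity)]
    have hr : ((r : ℕ) : ℝ) ≤ (l : ℝ) ^ 2 + 1 := by exact_mod_cast r.2.le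
    have : ((r : ℕ) : ℝ) ≤ (l + 1) * ‖((bt l : GaussianInt) : ℂ)‖ := by
      calc ((r : ℕ) : ℝ) ≤ ‖((bt l : GaussianInt) : ℂ)‖ * ‖((bt l : GaussianInt) : ℂ)‖ := by
            rw [← sq, hbn]; exact hr
        _ ≤ _ := by gcongr
    calc _ ≤ (l + 1) * ‖((bt l : GaussianInt) : ℂ)‖ * n := by gcongr
      _ = _ := by ring
  have hzA : (l + 8) * (3 / 2) * ‖z‖ ≤ A / n := by
    calc (l + 8) * (3 / 2) * ‖z‖ ≤ (l + 8) * 2 * ((l + 1) / n) := by gcongr; norm_num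
      _ = A / n := by rw [hA]; ring
  have hAn : A / n ≤ 1 := by rw [div_le_one (by linarith)]; exact hc
  have hz2 : ‖z‖ ≤ 1 / 2 := by nlinarith [norm_nonneg z]
  have hα : bt l * γ + ((r : ℕ) : GaussianInt) ≠ 0 := by
    intro h
    have h1 := congrArg (fun x : GaussianInt => (x : ℂ)) h
    simp only [GaussianInt.toComplex_add, GaussianInt.toComplex_mul, GaussianInt.toComplex_zero, map_natCast] at h1
    have h2 : z = -1 := by
      rw [hz, div_eq_iff hwc]
      linear_combination h1
    rw [h2] at hz2
    norm_num at hz2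
  have hq : ((bt l * γ + ((r : ℕ) : GaussianInt) : GaussianInt) : ℂ) / ((bt l * γ : GaussianInt) : ℂ) = 1 + z := by
    simp only [GaussianInt.toComplex_add, GaussianInt.toComplex_mul, map_natCast]
    rw [hz, add_div, div_self hwc]
  rw [g_ratio l s hα hw, hq]
  set Lg := Complex.log (1 + z) with hLg
  have hLb : ‖Lg‖ ≤ 3 / 2 * ‖z‖ := norm_log_one_add_half_le_self hz2
  set x : ℂ := (l : ℂ) * (((Lg).im : ℝ) * I) - 2 * s * ((Lg).re : ℝ) with hx
  have hxb : ‖x‖ ≤ A / n := by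
    refine le_trans ?_ hzA
    calc ‖x‖ ≤ ‖(l : ℂ) * (((Lg).im : ℝ) * I)‖ + ‖2 * s * ((Lg).re : ℝ)‖ := norm_sub_le _ _
      _ = l * |Lg.im| + 2 * ‖s‖ * |Lg.re| := by simp
      _ ≤ l * ‖Lg‖ + 2 * 4 * ‖Lg‖ := by
        gcongr
        · exact abs_im_le_norm _
        · exact abs_re_le_norm _
      _ = (l + 8) * ‖Lg‖ := by ring
      _ ≤ (l + 8) * (3 / 2 * ‖z‖) := by gcongr
      _ = _ := by ring
  have hfin : g l s (bt l * γ) * cexp x - g l s (bt l * γ) = g l s (bt l * γ) * (cexp x - 1) := by ring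
  rw [hfin, norm_mul]
  have hE := Complex.norm_exp_sub_one_le (hxb.trans hAn)
  have hg : ‖g l s (bt l * γ)‖ ≤ n ^ (-(3 / 2) : ℝ) := by
    rw [norm_g l (by linarith)]
    have h1 : nm γ ≤ nm (bt l * γ) := by
      rw [nm_mul]
      nlinarith [nm_one_le (bt_ne l), nm_nonneg γ]
    calc nm (bt l * γ) ^ (-s.re) ≤ nm (bt l * γ) ^ (-(3 / 4) : ℝ) :=
          Real.rpow_le_rpow_of_exponent_le (nm_one_le hw) (by linarith)
      _ ≤ nm γ ^ (-(3 / 4) : ℝ) := Real.rpow_le_rpow_of_nonpos (nm_pos hγ) h1 (by norm_num)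
      _ = _ := by rw [hnn, ← Real.rpow_natCast, ← Real.rpow_mul (by linarith)]; norm_num
  calc ‖g l s (bt l * γ)‖ * ‖cexp x - 1‖ ≤ n ^ (-(3 / 2) : ℝ) * (2 * (A / n)) := by
        gcongr
        linarith
    _ = 2 * A * (n ^ (-(3 / 2) : ℝ) * n ^ (-1 : ℝ)) := by
        rw [Real.rpow_neg_one]; ring
    _ = 2 * A * n ^ (-(5 / 2) : ℝ) := by rw [← Real.rpow_add (by linarith)]; norm_num
    _ ≤ 2 * A ^ 3 * n ^ (-(5 / 2) : ℝ) := by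
        gcongr
        nlinarith [sq_nonneg A]
    _ = _ := by rw [hnp]

open Classical in
noncomputable def ub (l : ℕ) (γ : GaussianInt) : ℝ :=
  ((l : ℝ) ^ 2 + 1) * (2 * (2 * (l + 8) * (l + 1) : ℝ) ^ 3) * (nm γ ^ (-(5 / 4) : ℝ) + if γ = 0 then 1 else 0)

lemma tt_bound {l : ℕ} {s : ℂ} (hs : 3 / 4 ≤ s.re) (hs4 : ‖s‖ ≤ 4) (γ : GaussianInt) :
    ‖tt l γ s‖ ≤ ub l γ := by
  have hl : (0 : ℝ) ≤ l := by positivity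
  have key : ∀ r : Fin (l ^ 2 + 1),
      ‖g l s (bt l * γ + ((r : ℕ) : GaussianInt)) - g l s (bt l * γ)‖ ≤
      (2 * (2 * (l + 8) * (l + 1) : ℝ) ^ 3) * (nm γ ^ (-(5 / 4) : ℝ) + if γ = 0 then 1 else 0) := by
    intro r
    by_cases h : γ = 0
    · subst h
      simp only [mul_zero, zero_add, g_zero, sub_zero, if_true]
      rw [nm_zero, Real.zero_rpow (by norm_num), norm_g l (by linarith)]
      have h1 : nm ((r : ℕ) : GaussianInt) ^ (-s.re) ≤ 1 := by
        by_cases h : ((r : ℕ) : GaussianInt) = 0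
        · rw [h, nm_zero, Real.zero_rpow (by linarith)]; norm_num
        · exact Real.rpow_le_one_of_one_le_of_nonpos (nm_one_le h) (by linarith)
      have h2 : 1 ≤ 2 * ((l : ℝ) + 8) * (l + 1) := by nlinarith
      have h3 := one_le_pow₀ h2 (n := 3)
      linarith
    · simp only [h, if_false, add_zero]
      exact tt_term_bound hs hs4 h r
  refine (norm_sum_le _ _).trans ((Finset.sum_le_card_nsmul _ _ _ (fun r _ => key r)).trans ?_)
  rw [ub]
  simp only [Finset.card_univ, Fintype.card_fin, nsmul_eq_mul]
  push_cast
  apply le_of_eq; ring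

lemma summable_ub (l : ℕ) : Summable (ub l) := by
  refine Summable.mul_left _ ((summable_nm (by norm_num)).add ?_)
  exact (hasSum_ite_eq (0 : GaussianInt) (1 : ℝ)).summable

lemma tsum_ub (l : ℕ) : ∑' γ, ub l γ = ((l : ℝ) ^ 2 + 1) * (2 * (2 * (l + 8) * (l + 1) : ℝ) ^ 3) *
    (∑' γ, nm γ ^ (-(5 / 4) : ℝ) + 1) := by
  unfold ub
  rw [tsum_mul_left, (summable_nm (by norm_num)).tsum_add (hasSum_ite_eq (0 : GaussianInt) (1 : ℝ)).summable,
    (hasSum_ite_eq (0 : GaussianInt) (1 : ℝ)).tsum_eq]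

lemma isOpen_region : IsOpen ({z : ℂ | 3 / 4 < z.re} ∩ ball 0 4) :=
  (isOpen_lt continuous_const continuous_re).inter isOpen_ball

lemma differentiableOn_G (l : ℕ) : DifferentiableOn ℂ (G l) ({z : ℂ | 3 / 4 < z.re} ∩ ball 0 4) := by
  refine differentiableOn_tsum_of_summable_norm (summable_ub l) (fun γ => ?_) isOpen_region ?_
  · unfold tt
    exact (Differentiable.fun_sum fun r _ =>
      (differentiable_g l _).sub (differentiable_g l _)).differentiableOn
  · intro γ w hw
    exact tt_bound hw.1.le (by have := mem_ball_zero_iff.mp hw.2; exact this.le) γ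

lemma norm_G_le : ∃ C0 : ℝ, 0 < C0 ∧ ∀ l : ℕ, 4 ≤ l → ∀ s : ℂ, 3 / 4 < s.re → ‖s‖ < 4 →
    ‖G l s‖ ≤ C0 * (l : ℝ) ^ 8 := by
  set S := ∑' γ, nm γ ^ (-(5 / 4) : ℝ) with hS
  have hS0 : 0 ≤ S := tsum_nonneg fun γ => Real.rpow_nonneg (nm_nonneg γ) _
  refine ⟨6912 * (S + 1), by positivity, fun l hl s hs hs4 => ?_⟩
  have h1 : ‖G l s‖ ≤ ∑' γ, ub l γ :=
    tsum_of_norm_bounded (summable_ub l).hasSum (fun γ => tt_bound hs.le hs4.le γ)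
  refine h1.trans ?_
  rw [tsum_ub, ← hS]
  have hl' : (4 : ℝ) ≤ l := by exact_mod_cast hl
  have e1 : (l : ℝ) ^ 2 + 1 ≤ 2 * l ^ 2 := by nlinarith
  have e2 : 2 * ((l : ℝ) + 8) * (l + 1) ≤ 12 * l ^ 2 := by nlinarith
  calc ((l : ℝ) ^ 2 + 1) * (2 * (2 * (l + 8) * (l + 1) : ℝ) ^ 3) * (S + 1)
      ≤ (2 * l ^ 2) * (2 * (12 * (l : ℝ) ^ 2) ^ 3) * (S + 1) := by gcongr
    _ = _ := by ring

end SACB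
namespace SACB
open Complex Metric Set

noncomputable def E (l : ℕ) (s : ℂ) : ℂ := 1 - ((l ^ 2 + 1 : ℕ) : ℂ) * g l s (bt l)

lemma norm_E_term (l : ℕ) {s : ℂ} (hs : s.re ≠ 0) :
    ‖((l ^ 2 + 1 : ℕ) : ℂ) * g l s (bt l)‖ = ((l ^ 2 + 1 : ℕ) : ℝ) ^ (1 - s.re) := by
  rw [norm_mul, norm_g l hs, nm_bt, norm_natCast, sub_eq_add_neg, Real.rpow_add (by positivity), Real.rpow_one]

lemma E_ne {l : ℕ} (hl : 1 ≤ l) {s : ℂ} (hs : 1 < s.re) : E l s ≠ 0 := by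
  intro h
  have h1 : ((l ^ 2 + 1 : ℕ) : ℂ) * g l s (bt l) = 1 := by
    unfold E at h; linear_combination -h
  have h2 := norm_E_term l (s := s) (by linarith)
  rw [h1, norm_one] at h2
  have h3 : (1 : ℝ) < ((l ^ 2 + 1 : ℕ) : ℝ) := by
    have : 1 < l ^ 2 + 1 := by nlinarith
    exact_mod_cast this
  have := Real.rpow_lt_one_of_one_lt_of_neg h3 (show 1 - s.re < 0 by linarith)
  linarith

lemma hasDerivAt_E (l : ℕ) (s : ℂ) : HasDerivAt (E l)
    (((l ^ 2 + 1 : ℕ) : ℂ) * (((Real.log (nm (bt l)) : ℝ) : ℂ) * g l s (bt l))) s := by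
  have := ((hasDerivAt_g l (bt l) s).const_mul ((l ^ 2 + 1 : ℕ) : ℂ)).const_sub 1
  refine this.congr_deriv ?_
  ring

lemma E_lower {l : ℕ} (hl : 4 ≤ l) {u : ℝ} (hu : 0 ≤ u) : 1 / 2 ≤ ‖E l (1 + u : ℝ)‖ := by
  have hl' : (4 : ℝ) ≤ l := by exact_mod_cast hl
  have hl0 : (l : ℂ) ≠ 0 := by norm_cast; omega
  set z : ℂ := I / l with hz
  have hzn : ‖z‖ = 1 / l := by simp [hz]
  have hz1 : ‖z‖ ≤ 1 / 4 := by rw [hzn]; exact one_div_le_one_div_of_le (by norm_num) hl'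
  have hbt : ((bt l : GaussianInt) : ℂ) = l * (1 + z) := by
    rw [hz, mul_add, mul_div_cancel₀ _ hl0, GaussianInt.toComplex_def]
    simp [bt]
  set φ : ℝ := l * (Complex.log (1 + z)).im with hφ
  have hlog := Complex.norm_log_one_add_sub_self_le (z := z) (by linarith)
  have him : |(Complex.log (1 + z)).im - 1 / l| ≤ (1 / l) ^ 2 * (4 / 3) / 2 := by
    have h1 := Complex.abs_im_le_norm (Complex.log (1 + z) - z)
    have h2 : z.im = 1 / l := by
      rw [hz, Complex.div_natCast_im]; simp
    rw [Complex.sub_im, h2] at h1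
    refine h1.trans (hlog.trans ?_)
    rw [← hzn]
    gcongr
    rw [inv_le_comm₀ (by linarith) (by norm_num)]
    linarith
  have hφ1 : |φ - 1| ≤ 1 / 6 := by
    have e : φ - 1 = l * ((Complex.log (1 + z)).im - 1 / l) := by
      rw [hφ]; field_simp
    rw [e, abs_mul, Nat.abs_cast]
    calc (l : ℝ) * |(Complex.log (1 + z)).im - 1 / l| ≤ l * ((1 / l) ^ 2 * (4 / 3) / 2) := by gcongr
      _ = (2 / 3) / l := by field_simp; norm_num
      _ ≤ (2 / 3) / 4 := by gcongr
      _ = 1 / 6 := by norm_num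
  rw [abs_le] at hφ1
  have hsin : 1 / 2 ≤ Real.sin φ := by
    have h1 := Real.mul_le_sin (x := φ) (by linarith) (by linarith [Real.pi_gt_three])
    refine le_trans ?_ h1
    have : (2 / Real.pi) * (5 / 6) ≤ 2 / Real.pi * φ := by gcongr; linarith
    refine le_trans ?_ this
    rw [div_mul_eq_mul_div, le_div_iff₀ Real.pi_pos]
    linarith [Real.pi_lt_d2]
  have hξ : ((((bt l : GaussianInt) : ℂ)) / (‖((bt l : GaussianInt) : ℂ)‖ : ℂ)) ^ l = cexp (φ * I) := by
    have h1z : 1 + z ≠ 0 := by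
      intro h
      have : z = -1 := by linear_combination h
      rw [this] at hz1; norm_num at hz1
    have h1 : (((bt l : GaussianInt) : ℂ)) / (‖((bt l : GaussianInt) : ℂ)‖ : ℂ) = cexp (((Complex.log (1 + z)).im : ℝ) * I) := by
      rw [hbt, norm_mul, norm_natCast]
      push_cast
      rw [mul_div_mul_left _ _ hl0, Complex.log_im]
      have := Complex.norm_mul_exp_arg_mul_I (1 + z)
      have hn : (‖1 + z‖ : ℂ) ≠ 0 := by simpa using h1z
      rw [div_eq_iff hn, mul_comm]; exact this.symm
    rw [h1, ← exp_nat_mul, hφ]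
    congr 1
    push_cast; ring
  set N : ℝ := ((l ^ 2 + 1 : ℕ) : ℝ) with hN
  have hN0 : 0 < N := by rw [hN]; positivity
  have hE : E l (1 + u : ℝ) = 1 - cexp (φ * I) * ((N * Real.exp (-(1 + u) * Real.log N) : ℝ) : ℂ) := by
    rw [E, g_ne _ _ (bt_ne l), hξ, nm_bt, ← hN]
    have : ((l ^ 2 + 1 : ℕ) : ℂ) = (N : ℂ) := by rw [hN]; push_cast; rfl
    rw [this]
    push_cast
    ring
  rw [hE]
  set t : ℝ := N * Real.exp (-(1 + u) * Real.log N) with ht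
  have h1 : ‖1 - cexp (φ * I) * (t : ℂ)‖ = ‖cexp (-(φ * I)) - t‖ := by
    have : 1 - cexp (φ * I) * (t : ℂ) = cexp (φ * I) * (cexp (-(φ * I)) - t) := by
      rw [mul_sub, ← exp_add]; simp
    rw [this, norm_mul, norm_exp_ofReal_mul_I, one_mul]
  rw [h1]
  have h2 := Complex.abs_im_le_norm (cexp (-(φ * I)) - t)
  have h3 : (cexp (-(φ * I)) - t).im = - Real.sin φ := by
    rw [sub_im, ofReal_im, sub_zero]
    have : -((φ : ℂ) * I) = ((-φ : ℝ) : ℂ) * I := by push_cast; ring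
    rw [this, exp_ofReal_mul_I_im, Real.sin_neg]
  rw [h3, abs_neg] at h2
  exact (hsin.trans (le_abs_self _)).trans h2

lemma E_logDeriv {l : ℕ} (hl : 4 ≤ l) {u : ℝ} (hu : 0 < u) :
    ‖deriv (E l) (1 + u : ℝ) / E l (1 + u : ℝ)‖ ≤ 6 * Real.log l := by
  have hl' : (4 : ℝ) ≤ l := by exact_mod_cast hl
  rw [(hasDerivAt_E l _).deriv, norm_div]
  have h1 := E_lower hl hu.le
  have hN : (1 : ℝ) ≤ ((l ^ 2 + 1 : ℕ) : ℝ) := by push_cast; nlinarith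
  have h2 : ‖((l ^ 2 + 1 : ℕ) : ℂ) * (((Real.log (nm (bt l)) : ℝ) : ℂ) * g l (1 + u : ℝ) (bt l))‖ ≤ 3 * Real.log l := by
    have : ((l ^ 2 + 1 : ℕ) : ℂ) * (((Real.log (nm (bt l)) : ℝ) : ℂ) * g l (1 + u : ℝ) (bt l))
      = ((Real.log (nm (bt l)) : ℝ) : ℂ) * (((l ^ 2 + 1 : ℕ) : ℂ) * g l (1 + u : ℝ) (bt l)) := by ring
    rw [this, norm_mul, norm_E_term l (by simp; linarith), norm_real, Real.norm_eq_abs, abs_of_nonneg (log_nm_nonneg _), nm_bt]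
    have h3 : ((l ^ 2 + 1 : ℕ) : ℝ) ^ (1 - ((1 + u : ℝ) : ℂ).re) ≤ 1 :=
      Real.rpow_le_one_of_one_le_of_nonpos hN (by simp; linarith)
    have h4 : Real.log ((l ^ 2 + 1 : ℕ) : ℝ) ≤ 3 * Real.log l := by
      have : (3 : ℝ) * Real.log l = Real.log ((l : ℝ) ^ 3) := by rw [Real.log_pow]; norm_num
      rw [this]
      apply Real.log_le_log (by linarith)
      push_cast; nlinarith [sq_nonneg (l : ℝ)]
    have h5 : 0 ≤ Real.log ((l ^ 2 + 1 : ℕ) : ℝ) := Real.log_nonneg hN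
    nlinarith
  rw [div_le_iff₀ (by linarith)]
  have : 0 ≤ Real.log (l : ℝ) := Real.log_nonneg (by linarith)
  nlinarith

end SACB
namespace SACB
open Complex Metric Set

abbrev PA := {p : ℕ // p.Prime ∧ p % 4 = 1}
abbrev PB := {p : ℕ // p.Prime ∧ p % 4 ≠ 1}

/-- hypothesis on the representation -/
def Good (xp yp : ℕ → ℤ) : Prop :=
  ∀ p : ℕ, p.Prime → p % 4 = 1 → (p : ℤ) = xp p ^ 2 + yp p ^ 2

def repB (p : ℕ) : GaussianInt := if p = 2 then ⟨1, 1⟩ else ((p : ℕ) : GaussianInt)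

def rep (xp yp : ℕ → ℤ) : (PA ⊕ PA) ⊕ PB → GaussianInt
  | .inl (.inl p) => ⟨xp p, yp p⟩
  | .inl (.inr p) => ⟨xp p, - yp p⟩
  | .inr p => repB p

lemma norm_mk (a b : ℤ) : (Zsqrtd.norm (⟨a, b⟩ : GaussianInt)) = a ^ 2 + b ^ 2 := by
  simp [Zsqrtd.norm_def]; ring

lemma prime_of_norm {α : GaussianInt} {p : ℕ} (hp : p.Prime) (h : α.norm = p) : Prime α := by
  apply Irreducible.prime
  constructor
  · intro hu
    have := Zsqrtd.isUnit_iff_norm_isUnit α |>.mp hu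
    rw [h, Int.isUnit_iff] at this
    have := hp.one_lt
    omega
  · intro a b hab
    have h1 : a.norm * b.norm = p := by rw [← Zsqrtd.norm_mul, ← hab, h]
    have h2 : a.norm.natAbs * b.norm.natAbs = p := by
      rw [← Int.natAbs_mul, h1]; simp
    rw [← Zsqrtd.norm_eq_one_iff, ← Zsqrtd.norm_eq_one_iff]
    have h3 : Irreducible (a.norm.natAbs * b.norm.natAbs) := by rw [h2]; exact hp
    have := h3.isUnit_or_isUnit rfl
    simpa using this

lemma norm_repB {p : ℕ} : (repB p).norm = if p = 2 then 2 else (p : ℤ) ^ 2 := by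
  unfold repB
  split_ifs
  · rfl
  · rw [Zsqrtd.norm_natCast]; ring

lemma rep_norm {xp yp : ℕ → ℤ} (h : Good xp yp) (i : (PA ⊕ PA) ⊕ PB) :
    (rep xp yp i).norm = match i with
    | .inl (.inl p) => (p.1 : ℤ)
    | .inl (.inr p) => (p.1 : ℤ)
    | .inr p => if p.1 = 2 then 2 else (p.1 : ℤ) ^ 2 := by
  rcases i with (⟨p, hp⟩ | ⟨p, hp⟩) | ⟨p, hp⟩
  · simp only [rep]; rw [norm_mk, h p hp.1 hp.2]
  · simp only [rep]; rw [norm_mk, h p hp.1 hp.2]; ring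
  · simp only [rep]; exact norm_repB

lemma mod3 {p : ℕ} (hp : p.Prime) (h : p % 4 ≠ 1) (h2 : p ≠ 2) : p % 4 = 3 := by
  have := hp.eq_two_or_odd
  omega

lemma rep_prime {xp yp : ℕ → ℤ} (h : Good xp yp) (i : (PA ⊕ PA) ⊕ PB) : Prime (rep xp yp i) := by
  rcases i with (⟨p, hp⟩ | ⟨p, hp⟩) | ⟨p, hp⟩
  · exact prime_of_norm hp.1 (rep_norm h (.inl (.inl ⟨p, hp⟩)))
  · exact prime_of_norm hp.1 (rep_norm h (.inl (.inr ⟨p, hp⟩)))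
  · by_cases h2 : p = 2
    · subst h2
      exact prime_of_norm hp.1 (rep_norm h (.inr ⟨2, hp⟩))
    · simp only [rep, repB, h2, if_false]
      have := Fact.mk hp.1
      exact GaussianInt.prime_of_nat_prime_of_mod_four_eq_three p (mod3 hp.1 hp.2 h2)

lemma norm_eq_of_associated {a b : GaussianInt} (h : Associated a b) : a.norm = b.norm := by
  obtain ⟨u, rfl⟩ := h
  have := (Zsqrtd.norm_eq_one_iff' (by norm_num) (u : GaussianInt)).mpr u.isUnit
  rw [Zsqrtd.norm_mul, this, mul_one]

lemma not_dvd_conj {x y : ℤ} {p : ℕ} (hp : p.Prime) (h4 : p % 4 = 1) (h : (p : ℤ) = x ^ 2 + y ^ 2) :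
    ¬ ((⟨x, y⟩ : GaussianInt) ∣ ⟨x, -y⟩) := by
  intro hd
  have h1 : (⟨x, y⟩ : GaussianInt) ∣ ⟨2 * x, 0⟩ := by
    have := dvd_add (dvd_refl (⟨x, y⟩ : GaussianInt)) hd
    have e : (⟨x, y⟩ : GaussianInt) + ⟨x, -y⟩ = ⟨2 * x, 0⟩ := by
      ext
      · simp; ring
      · simp
    rwa [e] at this
  obtain ⟨c, hc⟩ := h1
  have h2 := congrArg Zsqrtd.norm hc
  rw [Zsqrtd.norm_mul, norm_mk, norm_mk, ← h] at h2
  have hpi : Prime (p : ℤ) := Nat.prime_iff_prime_int.mp hp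
  have h3 : (p : ℤ) ∣ (2 * x) ^ 2 := ⟨_, by rw [← h2]; ring⟩
  have h4' : (p : ℤ) ∣ 2 * x := hpi.dvd_of_dvd_pow h3
  rcases hpi.dvd_or_dvd h4' with h5 | h5
  · have : p ∣ 2 := by exact_mod_cast h5
    have := (Nat.prime_dvd_prime_iff_eq hp Nat.prime_two).mp this
    omega
  · obtain ⟨d, rfl⟩ := h5
    have hp0 : (1 : ℤ) < p := by exact_mod_cast hp.one_lt
    by_cases hd0 : d = 0
    · subst hd0
      have h6 : (p : ℤ) = y * y := by rw [h]; ring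
      have := hpi.irreducible.isUnit_or_isUnit h6
      have hy : IsUnit (y * y) := by
        rcases this with h | h <;> exact h.mul h
      rw [← h6, Int.isUnit_iff] at hy
      omega
    · have : 1 ≤ d ^ 2 := by
        have : 0 < d ^ 2 := by positivity
        omega
      have e1 : (p : ℤ) ^ 2 * 1 ≤ (p : ℤ) ^ 2 * d ^ 2 := by gcongr
      have e2 : ((p : ℤ) * d) ^ 2 = (p : ℤ) ^ 2 * d ^ 2 := by ring
      rw [e2] at h
      nlinarith [sq_nonneg y]

lemma not_sq_prime {p q : ℕ} (hp : p.Prime) (h : (p : ℤ) = (q : ℤ) ^ 2) : False := by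
  have h1 : p = q ^ 2 := by exact_mod_cast h
  rw [h1] at hp
  exact Nat.Prime.not_prime_pow (le_refl 2) hp

lemma rep_inj {xp yp : ℕ → ℤ} (h : Good xp yp) {i j : (PA ⊕ PA) ⊕ PB}
    (ha : Associated (rep xp yp i) (rep xp yp j)) : i = j := by
  have hn := norm_eq_of_associated ha
  rw [rep_norm h, rep_norm h] at hn
  have aux : ∀ p q : ℕ, p.Prime → p % 4 = 1 → q.Prime → q % 4 ≠ 1 →
      (p : ℤ) = (if q = 2 then 2 else (q : ℤ) ^ 2) → False := by
    intro p q hp hp4 hq hq4 he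
    split_ifs at he with h2
    · have : p = 2 := by exact_mod_cast he
      omega
    · exact not_sq_prime hp he
  rcases i with (⟨p, hp⟩ | ⟨p, hp⟩) | ⟨p, hp⟩ <;> rcases j with (⟨q, hq⟩ | ⟨q, hq⟩) | ⟨q, hq⟩ <;>
    simp only at hn
  · have : p = q := by exact_mod_cast hn
    subst this; rfl
  · have : p = q := by exact_mod_cast hn
    subst this
    exact absurd ha.dvd (not_dvd_conj hp.1 hp.2 (h p hp.1 hp.2))
  · exact (aux p q hp.1 hp.2 hq.1 hq.2 hn).elim
  · have : p = q := by exact_mod_cast hn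
    subst this
    exact absurd ha.symm.dvd (not_dvd_conj hp.1 hp.2 (h p hp.1 hp.2))
  · have : p = q := by exact_mod_cast hn
    subst this; rfl
  · exact (aux p q hp.1 hp.2 hq.1 hq.2 hn).elim
  · exact (aux q p hq.1 hq.2 hp.1 hp.2 hn.symm).elim
  · exact (aux q p hq.1 hq.2 hp.1 hp.2 hn.symm).elim
  · have : p = q := by
      split_ifs at hn with h1 h2 h2
      · omega
      · exact (not_sq_prime Nat.prime_two (by exact_mod_cast hn)).elim
      · exact (not_sq_prime Nat.prime_two (by exact_mod_cast hn.symm)).elim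
      · have : p ^ 2 = q ^ 2 := by exact_mod_cast hn
        exact Nat.pow_left_injective (n := 2) (by norm_num) this
    subst this; rfl

lemma exists_nat_prime_dvd {q : GaussianInt} (hq : Prime q) : ∃ p : ℕ, p.Prime ∧ q ∣ ((p : ℕ) : GaussianInt) := by
  have h1 : q ∣ ((q.norm : ℤ) : GaussianInt) := ⟨star q, by rw [Zsqrtd.norm_eq_mul_conj]⟩
  have hn : ((q.norm.natAbs : ℕ) : ℤ) = q.norm := Int.natAbs_of_nonneg (GaussianInt.norm_nonneg q)
  set n := q.norm.natAbs with hnd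
  have h2 : q ∣ ((n : ℕ) : GaussianInt) := by
    rw [← hn] at h1
    simpa using h1
  have hn0 : n ≠ 0 := by
    rw [hnd, Int.natAbs_ne_zero]
    exact (GaussianInt.norm_pos.mpr hq.ne_zero).ne'
  have h3 : ((n : ℕ) : GaussianInt) = ((n.primeFactorsList.map (fun p : ℕ => (p : GaussianInt))).prod) := by
    conv_lhs => rw [← Nat.prod_primeFactorsList hn0]
    exact Nat.cast_list_prod _
  rw [h3, hq.dvd_prod_iff] at h2
  obtain ⟨a, ha, hqa⟩ := h2
  obtain ⟨p, hp, rfl⟩ := List.mem_map.mp ha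
  exact ⟨p, Nat.prime_of_mem_primeFactorsList hp, hqa⟩

lemma rep_surj {xp yp : ℕ → ℤ} (h : Good xp yp) {q : GaussianInt} (hq : Prime q) :
    ∃ i, Associated (rep xp yp i) q := by
  suffices ∃ i, q ∣ rep xp yp i by
    obtain ⟨i, hi⟩ := this
    exact ⟨i, ((hq.dvd_prime_iff_associated (rep_prime h i)).mp hi).symm⟩
  obtain ⟨p, hp, hd⟩ := exists_nat_prime_dvd hq
  by_cases h4 : p % 4 = 1
  · have e : ((p : ℕ) : GaussianInt) = rep xp yp (.inl (.inl ⟨p, hp, h4⟩)) * rep xp yp (.inl (.inr ⟨p, hp, h4⟩)) := by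
      simp only [rep]
      ext
      · simp; rw [h p hp h4]; ring
      · simp; ring
    rw [e] at hd
    rcases hq.dvd_or_dvd hd with h | h
    · exact ⟨_, h⟩
    · exact ⟨_, h⟩
  · refine ⟨.inr ⟨p, hp, h4⟩, ?_⟩
    simp only [rep, repB]
    split_ifs with h2
    · subst h2
      have e : ((2 : ℕ) : GaussianInt) = (⟨1, 1⟩ : GaussianInt) * ((⟨1, 1⟩ : GaussianInt) * ⟨0, -1⟩) := by
        ext <;> simp
      rw [e] at hd
      rcases hq.dvd_or_dvd hd with h | h
      · exact h
      · rcases hq.dvd_or_dvd h with h | h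
        · exact h
        · exfalso
          exact hq.not_isUnit (isUnit_of_dvd_unit h ((Zsqrtd.norm_eq_one_iff' (by norm_num) _).mp (by rfl)))
    · exact hd

open Classical in
lemma hasSum_log {xp yp : ℕ → ℤ} (h : Good xp yp) (α : GaussianInt) (hα : α ≠ 0) :
    HasSum (fun i => (multiplicity (rep xp yp i) α : ℝ) * Real.log (nm (rep xp yp i)))
      (Real.log (nm α)) := by
  induction α using UniqueFactorizationMonoid.induction_on_prime with
  | h₁ => exact absurd rfl hα
  | h₂ u hu =>
    have h1 : nm u = 1 := by
      rw [nm, (Zsqrtd.norm_eq_one_iff' (by norm_num) u).mpr hu]; norm_num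
    rw [h1, Real.log_one]
    have : ∀ i, multiplicity (rep xp yp i) u = 0 := by
      intro i
      rw [multiplicity_eq_zero]
      intro hd
      exact (rep_prime h i).not_isUnit (isUnit_of_dvd_unit hd hu)
    simp only [this, Nat.cast_zero, zero_mul]
    exact hasSum_zero
  | h₃ a q ha hq ih =>
    obtain ⟨j, hj⟩ := rep_surj h hq
    have h1 := ih ha
    have hqn : Real.log (nm q) = Real.log (nm (rep xp yp j)) := by
      rw [nm, nm, norm_eq_of_associated hj]
    rw [nm_mul, Real.log_mul (nm_pos hq.ne_zero).ne' (nm_pos ha).ne', hqn, add_comm]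
    have h2 := h1.add (hasSum_ite_eq j (Real.log (nm (rep xp yp j))))
    refine h2.congr_fun ?_
    intro i
    have hm : multiplicity (rep xp yp i) (q * a) = multiplicity (rep xp yp i) q + multiplicity (rep xp yp i) a :=
      multiplicity_mul (rep_prime h i) (FiniteMultiplicity.of_prime_left (rep_prime h i) hα)
    have hm2 : multiplicity (rep xp yp i) q = if i = j then 1 else 0 := by
      split_ifs with hij
      · subst hij
        rw [← multiplicity_eq_of_associated_right hj]
        exact multiplicity_self
      · rw [multiplicity_eq_zero]
        intro hd
        have := ((rep_prime h i).dvd_prime_iff_associated hq).mp hd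
        exact hij (rep_inj h (this.trans hj.symm))
    rw [hm, hm2]
    split_ifs with hij
    · subst hij; push_cast; ring
    · simp

end SACB
namespace SACB
open Complex Metric Set

abbrev PI := (PA ⊕ PA) ⊕ PB

open Classical in
lemma hasSum_log2 {xp yp : ℕ → ℤ} (h : Good xp yp) (α : GaussianInt) (hα : α ≠ 0) :
    HasSum (fun ik : PI × ℕ => if (rep xp yp ik.1) ^ (ik.2 + 1) ∣ α then
      Real.log (nm (rep xp yp ik.1)) else 0) (Real.log (nm α)) := by
  have hin : ∀ i : PI, HasSum (fun k : ℕ => if (rep xp yp i) ^ (k + 1) ∣ α then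
      Real.log (nm (rep xp yp i)) else 0)
      ((multiplicity (rep xp yp i) α : ℝ) * Real.log (nm (rep xp yp i))) := by
    intro i
    have hf := FiniteMultiplicity.of_prime_left (rep_prime h i) hα
    have hs : ∑ k ∈ Finset.range (multiplicity (rep xp yp i) α),
        (if (rep xp yp i) ^ (k + 1) ∣ α then Real.log (nm (rep xp yp i)) else 0) =
        (multiplicity (rep xp yp i) α : ℝ) * Real.log (nm (rep xp yp i)) := by
      rw [Finset.sum_congr rfl (g := fun _ => Real.log (nm (rep xp yp i)))]
      · simp
      · intro k hk
        rw [if_pos]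
        rw [hf.pow_dvd_iff_le_multiplicity]
        exact Finset.mem_range.mp hk
    rw [← hs]
    apply hasSum_sum_of_ne_finset_zero
    intro k hk
    rw [if_neg]
    rw [hf.pow_dvd_iff_le_multiplicity]
    simpa using hk
  have hout := hasSum_log h α hα
  have hsm : Summable (fun ik : PI × ℕ => if (rep xp yp ik.1) ^ (ik.2 + 1) ∣ α then
      Real.log (nm (rep xp yp ik.1)) else 0) := by
    rw [summable_prod_of_nonneg]
    · refine ⟨fun i => (hin i).summable, ?_⟩
      refine hout.summable.congr fun i => ?_
      exact (hin i).tsum_eq.symm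
    · intro ik
      simp only [Pi.zero_apply]
      split_ifs
      · exact log_nm_nonneg _
      · exact le_rfl
  have h1 := hsm.hasSum.prod_fiberwise hin
  rw [← h1.unique hout]
  exact hsm.hasSum

open Classical in
noncomputable def wt (xp yp : ℕ → ℤ) (α : GaussianInt) (ik : PI × ℕ) : ℝ :=
  if (rep xp yp ik.1) ^ (ik.2 + 1) ∣ α then Real.log (nm (rep xp yp ik.1)) else 0

lemma hasSum_wt {xp yp : ℕ → ℤ} (h : Good xp yp) (α : GaussianInt) (hα : α ≠ 0) :
    HasSum (wt xp yp α) (Real.log (nm α)) := hasSum_log2 h α hα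

lemma wt_nonneg (xp yp : ℕ → ℤ) (α : GaussianInt) (ik : PI × ℕ) : 0 ≤ wt xp yp α ik := by
  unfold wt
  split_ifs
  · exact log_nm_nonneg _
  · exact le_rfl

lemma wt_pos {xp yp : ℕ → ℤ} {α : GaussianInt} {ik : PI × ℕ} (h : (rep xp yp ik.1) ^ (ik.2 + 1) ∣ α) :
    wt xp yp α ik = Real.log (nm (rep xp yp ik.1)) := by
  unfold wt
  rw [if_pos h]

lemma wt_neg {xp yp : ℕ → ℤ} {α : GaussianInt} {ik : PI × ℕ} (h : ¬ (rep xp yp ik.1) ^ (ik.2 + 1) ∣ α) :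
    wt xp yp α ik = 0 := by
  unfold wt
  rw [if_neg h]

lemma swap_sum {𝕜 : Type*} [RCLike 𝕜] {xp yp : ℕ → ℤ} (h : Good xp yp) (f : GaussianInt → 𝕜)
    (h0 : f 0 = 0) (h1 : f 1 = 1) (hm : ∀ a b, f (a * b) = f a * f b)
    (hs : Summable fun α => Real.log (nm α) * ‖f α‖) :
    HasSum (fun ik : PI × ℕ => ((Real.log (nm (rep xp yp ik.1)) : ℝ) : 𝕜) *
      f (rep xp yp ik.1) ^ (ik.2 + 1) * ∑' α, f α)
      (∑' α, ((Real.log (nm α) : ℝ) : 𝕜) * f α) := by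
  have hw0 := wt_nonneg xp yp
  have hn : Summable (fun x : GaussianInt × (PI × ℕ) => wt xp yp x.1 x.2 * ‖f x.1‖) := by
    rw [summable_prod_of_nonneg]
    · refine ⟨fun α => ?_, ?_⟩
      · by_cases hα : α = 0
        · subst hα; simp only [h0, norm_zero, mul_zero]; exact summable_zero
        · have := (hasSum_wt h α hα).summable.mul_right ‖f α‖
          exact this
      · refine hs.congr fun α => ?_
        by_cases hα : α = 0
        · subst hα; simp [h0]
        · exact ((hasSum_wt h α hα).mul_right _).tsum_eq.symm
    · intro x
      exact mul_nonneg (hw0 _ _) (norm_nonneg _)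
  have hf : Summable (fun x : GaussianInt × (PI × ℕ) => ((wt xp yp x.1 x.2 : ℝ) : 𝕜) * f x.1) := by
    refine Summable.of_norm_bounded hn fun x => ?_
    rw [norm_mul, RCLike.norm_ofReal, abs_of_nonneg (hw0 _ _)]
  have hpow : ∀ a n, f (a ^ n) = f a ^ n := by
    intro a n
    induction n with
    | zero => simp [h1]
    | succ n ih => rw [pow_succ, hm, ih, pow_succ]
  have hin : ∀ ik : PI × ℕ, ∑' α, ((wt xp yp α ik : ℝ) : 𝕜) * f α =
      ((Real.log (nm (rep xp yp ik.1)) : ℝ) : 𝕜) * f (rep xp yp ik.1) ^ (ik.2 + 1) * ∑' α, f α := by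
    intro ik
    set d := rep xp yp ik.1 ^ (ik.2 + 1) with hd
    have hd0 : d ≠ 0 := pow_ne_zero _ (rep_prime h ik.1).ne_zero
    rw [← (mul_right_injective₀ hd0).tsum_eq]
    · have : ∀ β, ((wt xp yp (d * β) ik : ℝ) : 𝕜) * f (d * β) =
        ((Real.log (nm (rep xp yp ik.1)) : ℝ) : 𝕜) * f (rep xp yp ik.1) ^ (ik.2 + 1) * f β := by
        intro β
        have : wt xp yp (d * β) ik = Real.log (nm (rep xp yp ik.1)) := by
          exact wt_pos (dvd_mul_right _ _)
        rw [this, hm, hd, hpow, mul_assoc]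
      simp_rw [this]
      rw [tsum_mul_left]
    · intro α hα
      by_contra hc
      apply hα
      have : wt xp yp α ik = 0 := by
        apply wt_neg
        rintro ⟨β, hβ⟩
        exact hc ⟨β, hβ.symm⟩
      simp [this]
  have hs1 := hf.prod_symm.prod
  have e : (fun ik : PI × ℕ => ∑' α, ((wt xp yp α ik : ℝ) : 𝕜) * f α) = _ := funext hin
  have hs2 : Summable (fun ik : PI × ℕ => ∑' α, ((wt xp yp α ik : ℝ) : 𝕜) * f α) := hs1
  have ht : ∑' ik, ∑' α, ((wt xp yp α ik : ℝ) : 𝕜) * f α = ∑' α, ((Real.log (nm α) : ℝ) : 𝕜) * f α := by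
    rw [Summable.tsum_comm (f := fun α ik => ((wt xp yp α ik : ℝ) : 𝕜) * f α) hf]
    refine tsum_congr fun α => ?_
    by_cases hα : α = 0
    · subst hα; simp [h0]
    · rw [tsum_mul_right]
      congr 1
      have := hasSum_wt h α hα
      exact (RCLike.hasSum_ofReal (𝕜 := 𝕜) |>.mpr this).tsum_eq
  have := hs2.hasSum
  rw [ht, e] at this
  exact this

noncomputable def KK (σ : ℝ) : ℝ := ∑' α : GaussianInt, Real.log (nm α) * nm α ^ (-σ)

lemma nm_one : nm 1 = 1 := by simp [nm]

lemma Dabs {xp yp : ℕ → ℤ} (h : Good xp yp) {σ : ℝ} (hσ : 1 < σ) :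
    Summable (fun ik : PI × ℕ => Real.log (nm (rep xp yp ik.1)) * (nm (rep xp yp ik.1) ^ (-σ)) ^ (ik.2 + 1)) ∧
    ∑' ik : PI × ℕ, Real.log (nm (rep xp yp ik.1)) * (nm (rep xp yp ik.1) ^ (-σ)) ^ (ik.2 + 1) ≤ KK σ := by
  have hnn : ∀ α, 0 ≤ nm α ^ (-σ) := fun α => Real.rpow_nonneg (nm_nonneg α) _
  have hz : 1 ≤ ∑' α, nm α ^ (-σ) := by
    have := (summable_nm hσ).le_tsum (1 : GaussianInt) (fun α _ => hnn α)
    rwa [nm_one, Real.one_rpow] at this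
  have H : HasSum (fun ik : PI × ℕ => Real.log (nm (rep xp yp ik.1)) *
      (nm (rep xp yp ik.1) ^ (-σ)) ^ (ik.2 + 1) * ∑' α, nm α ^ (-σ)) (KK σ) := swap_sum (𝕜 := ℝ) h (fun α => nm α ^ (-σ)) (by simp [nm_zero]; rw [Real.zero_rpow]; linarith)
    (by simp [nm_one]) (fun a b => by rw [nm_mul, Real.mul_rpow (nm_nonneg _) (nm_nonneg _)])
    (by
      refine (summable_log_nm hσ).congr fun α => ?_
      rw [Real.norm_of_nonneg (hnn α)])
  have H2 := H.mul_right (∑' α, nm α ^ (-σ))⁻¹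
  simp only [mul_assoc] at H2
  rw [mul_inv_cancel₀ (by linarith)] at H2
  simp only [mul_one] at H2
  refine ⟨H2.summable, ?_⟩
  rw [H2.tsum_eq]
  have : 0 ≤ KK σ := tsum_nonneg fun α => mul_nonneg (log_nm_nonneg α) (hnn α)
  exact mul_le_of_le_one_right this (inv_le_one_of_one_le₀ hz)

lemma Dabs0 {xp yp : ℕ → ℤ} (h : Good xp yp) {σ : ℝ} (hσ : 1 < σ) :
    Summable (fun i : PI => Real.log (nm (rep xp yp i)) * nm (rep xp yp i) ^ (-σ)) ∧
    ∑' i : PI, Real.log (nm (rep xp yp i)) * nm (rep xp yp i) ^ (-σ) ≤ KK σ := by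
  obtain ⟨h1, h2⟩ := Dabs h hσ
  have hinj : Function.Injective (fun i : PI => (i, 0) : PI → PI × ℕ) := fun a b hab => by
    simpa using hab
  have h3 := h1.comp_injective hinj
  have h4 : Summable (fun i : PI => Real.log (nm (rep xp yp i)) * nm (rep xp yp i) ^ (-σ)) := by
    refine h3.congr fun i => ?_
    simp
  refine ⟨h4, le_trans ?_ h2⟩
  refine Summable.tsum_le_tsum_of_inj _ hinj ?_ ?_ h4 h1
  · intro c _
    exact mul_nonneg (log_nm_nonneg _) (pow_nonneg (Real.rpow_nonneg (nm_nonneg _) _) _)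
  · intro i; simp

noncomputable def D (xp yp : ℕ → ℤ) (l : ℕ) (s : ℂ) : ℂ :=
  ∑' ik : PI × ℕ, ((Real.log (nm (rep xp yp ik.1)) : ℝ) : ℂ) * g l s (rep xp yp ik.1) ^ (ik.2 + 1)

lemma norm_D_term (xp yp : ℕ → ℤ) (l : ℕ) {s : ℂ} (hs : 1 < s.re) (ik : PI × ℕ) :
    ‖((Real.log (nm (rep xp yp ik.1)) : ℝ) : ℂ) * g l s (rep xp yp ik.1) ^ (ik.2 + 1)‖ =
    Real.log (nm (rep xp yp ik.1)) * (nm (rep xp yp ik.1) ^ (-s.re)) ^ (ik.2 + 1) := by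
  rw [norm_mul, norm_pow, norm_g l (by linarith), norm_real, Real.norm_eq_abs, abs_of_nonneg (log_nm_nonneg _)]

lemma hasSum_D {xp yp : ℕ → ℤ} (h : Good xp yp) (l : ℕ) {s : ℂ} (hs : 1 < s.re) :
    HasSum (fun ik : PI × ℕ => ((Real.log (nm (rep xp yp ik.1)) : ℝ) : ℂ) * g l s (rep xp yp ik.1) ^ (ik.2 + 1))
      (D xp yp l s) := by
  apply Summable.hasSum
  refine Summable.of_norm ?_
  simp_rw [norm_D_term xp yp l hs]
  exact (Dabs h hs).1

lemma norm_D_le {xp yp : ℕ → ℤ} (h : Good xp yp) (l : ℕ) {s : ℂ} (hs : 1 < s.re) :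
    ‖D xp yp l s‖ ≤ KK s.re := by
  refine le_trans ?_ (Dabs h hs).2
  refine (norm_tsum_le_tsum_norm ?_).trans (le_of_eq ?_)
  · simp_rw [norm_D_term xp yp l hs]
    exact (Dabs h hs).1
  · exact tsum_congr fun ik => norm_D_term xp yp l hs ik

lemma g_one (l : ℕ) (s : ℂ) : g l s 1 = 1 := by
  rw [g_ne _ _ one_ne_zero]; simp [nm_one]

lemma deriv_F {xp yp : ℕ → ℤ} (h : Good xp yp) (l : ℕ) {s : ℂ} (hs : 1 < s.re) :
    HasDerivAt (F l) (-(D xp yp l s * F l s)) s := by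
  have H := swap_sum (𝕜 := ℂ) h (g l s) (g_zero l s) (g_one l s) (g_mul l s)
    (by
      refine (summable_log_nm hs).congr fun α => ?_
      rw [norm_g l (by linarith)])
  have H2 := (hasSum_D h l hs).mul_right (F l s)
  have := H.unique H2
  have H3 := hasDerivAt_F l hs
  rw [← this]
  exact H3

end SACB
namespace SACB
open Complex Metric Set

lemma pow_four_of_nm_one {α : GaussianInt} (h : nm α = 1) : α ^ 4 = 1 := by
  have h1 : α.re ^ 2 + α.im ^ 2 = 1 := by
    rw [nm_coord] at h; exact_mod_cast h
  obtain ⟨a, b⟩ := α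
  simp only at h1
  have ha1 : a ≤ 1 := by nlinarith
  have ha2 : -1 ≤ a := by nlinarith
  have hb1 : b ≤ 1 := by nlinarith
  have hb2 : -1 ≤ b := by nlinarith
  interval_cases a <;> interval_cases b <;> first | (norm_num at h1; done) | rfl

lemma g_unit {l : ℕ} (hl : 4 ∣ l) (s : ℂ) {α : GaussianInt} (h : nm α = 1) : g l s α = 1 := by
  have h0 : α ≠ 0 := by
    rintro rfl; rw [nm_zero] at h; norm_num at h
  obtain ⟨m, rfl⟩ := hl
  rw [g_ne _ _ h0, h]
  have h1 : ‖(α : ℂ)‖ = 1 := by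
    have := nm_eq α
    rw [h] at this
    nlinarith [norm_nonneg (α : ℂ), sq_nonneg (‖(α : ℂ)‖ - 1)]
  have h2 : (α : ℂ) ^ 4 = 1 := by
    rw [← map_pow, pow_four_of_nm_one h, map_one]
  rw [h1, pow_mul]
  simp [h2]

noncomputable def S2 : ℝ := ∑' α : GaussianInt, nm α ^ (-2 : ℝ)

lemma F_lower {l : ℕ} (hl : 4 ∣ l) {s : ℂ} (hs : 2 ≤ s.re) :
    1 - 2 ^ (2 - s.re) * S2 ≤ ‖F l s‖ := by
  refine le_trans ?_ (Complex.re_le_norm _)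
  have hsg := summable_g l (show 1 < s.re by linarith)
  have h1 : (F l s).re = ∑' α, (g l s α).re := Complex.re_tsum hsg
  have hs2 : Summable fun α => (g l s α).re := (Complex.hasSum_re hsg.hasSum).summable
  classical
  have h2 : HasSum (fun α : GaussianInt => (if α = 1 then (1 : ℝ) else 0) - 2 ^ (2 - s.re) * nm α ^ (-2 : ℝ))
      (1 - 2 ^ (2 - s.re) * S2) :=
    (hasSum_ite_eq (1 : GaussianInt) (1 : ℝ)).sub ((summable_nm (by norm_num)).hasSum.mul_left _)
  rw [h1, ← h2.tsum_eq]
  refine h2.summable.tsum_le_tsum (fun α => ?_) hs2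
  have hnn : 0 ≤ (2 : ℝ) ^ (2 - s.re) * nm α ^ (-2 : ℝ) :=
    mul_nonneg (by positivity) (Real.rpow_nonneg (nm_nonneg α) _)
  by_cases h0 : α = 0
  · subst h0; rw [g_zero]; simp only [zero_re]
    rw [if_neg (by norm_num)]; linarith
  by_cases hu : nm α = 1
  · rw [g_unit hl s hu, one_re]
    split_ifs <;> linarith
  · have hne : α ≠ 1 := by rintro rfl; exact hu nm_one
    rw [if_neg hne, zero_sub]
    have h3 : 2 ≤ nm α := by
      have h4 : 1 ≤ α.norm := by have := GaussianInt.norm_pos.mpr h0; omega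
      have h5 : α.norm ≠ 1 := by
        intro h; apply hu; rw [nm, h]; norm_num
      have : 2 ≤ α.norm := by omega
      unfold nm; exact_mod_cast this
    have h4 : ‖g l s α‖ ≤ 2 ^ (2 - s.re) * nm α ^ (-2 : ℝ) := by
      rw [norm_g l (by linarith)]
      have : -s.re = (2 - s.re) + (-2) := by ring
      rw [this, Real.rpow_add (show 0 < nm α by linarith)]
      refine mul_le_mul_of_nonneg_right ?_ (Real.rpow_nonneg (nm_nonneg α) _)
      exact Real.rpow_le_rpow_of_nonpos (by norm_num) h3 (by linarith)
    have := neg_le_of_abs_le ((Complex.abs_re_le_norm _).trans h4)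
    exact this

lemma KK_anti {σ τ : ℝ} (hσ : 1 < σ) (h : σ ≤ τ) : KK τ ≤ KK σ := by
  refine (summable_log_nm (hσ.trans_le h)).tsum_le_tsum (fun α => ?_) (summable_log_nm hσ)
  by_cases h0 : α = 0
  · simp [h0, nm_zero]
  · have := log_nm_nonneg α
    gcongr
    exact nm_one_le h0

lemma KK_nonneg (σ : ℝ) : 0 ≤ KK σ :=
  tsum_nonneg fun α => mul_nonneg (log_nm_nonneg α) (Real.rpow_nonneg (nm_nonneg α) _)

lemma F_gronwall {xp yp : ℕ → ℤ} (h : Good xp yp) (l : ℕ) {s : ℂ} (hs : 1 < s.re) {b : ℝ} (hb : 0 ≤ b) :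
    ‖F l (s + b)‖ ≤ ‖F l s‖ * Real.exp (KK s.re * b) := by
  have hder : ∀ t : ℝ, 0 ≤ t → HasDerivAt (fun t : ℝ => F l (s + t)) (-(D xp yp l (s + t) * F l (s + t))) t := by
    intro t ht
    have h1 : 1 < (s + (t : ℂ)).re := by simp; linarith
    have h2 := deriv_F h l h1
    have h3 : HasDerivAt (fun t : ℝ => s + (t : ℂ)) 1 t := (Complex.ofRealCLM.hasDerivAt).const_add s
    have := h2.scomp t h3
    simp only [one_smul] at this
    exact this
  have key := norm_le_gronwallBound_of_norm_deriv_right_le (f := fun t : ℝ => F l (s + t))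
    (f' := fun t : ℝ => -(D xp yp l (s + t) * F l (s + t))) (δ := ‖F l s‖) (K := KK s.re) (ε := 0) (a := 0) (b := b)
    (fun t ht => (hder t ht.1).continuousAt.continuousWithinAt)
    (fun t ht => (hder t ht.1).hasDerivWithinAt) (by simp)
    (fun t ht => by
      rw [norm_neg, norm_mul, add_zero]
      gcongr
      have h1 : s.re ≤ (s + (t : ℂ)).re := by simp; exact ht.1
      exact (norm_D_le h l (hs.trans_le h1)).trans (KK_anti hs h1)) b ⟨hb, le_rfl⟩
  rw [gronwallBound_ε0, sub_zero] at key
  exact key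

lemma exists_big : ∃ b : ℝ, 1 ≤ b ∧ 2 ^ (2 - b) * S2 ≤ (1 / 2 : ℝ) := by
  have hS : 0 ≤ S2 := tsum_nonneg fun α => Real.rpow_nonneg (nm_nonneg α) _
  obtain ⟨n, hn⟩ := pow_unbounded_of_one_lt (8 * S2) (show (1 : ℝ) < 2 by norm_num)
  refine ⟨n + 1, by linarith [Nat.cast_nonneg (α := ℝ) n], ?_⟩
  have : (2 : ℝ) - (n + 1) = 1 - n := by ring
  rw [this, Real.rpow_sub (by norm_num), Real.rpow_natCast, Real.rpow_one, div_mul_eq_mul_div, div_le_iff₀ (by positivity)]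
  linarith

lemma F_lower_unif : ∃ b : ℝ, ∀ xp yp : ℕ → ℤ, Good xp yp → ∀ l : ℕ, 4 ∣ l → ∀ s : ℂ, 1 < s.re →
    1 / 2 * Real.exp (-(KK s.re * b)) ≤ ‖F l s‖ := by
  obtain ⟨b, hb1, hb⟩ := exists_big
  refine ⟨b, fun xp yp h l hl s hs => ?_⟩
  have h1 := F_gronwall h l hs (b := b) (by linarith)
  have hS : 0 ≤ S2 := tsum_nonneg fun α => Real.rpow_nonneg (nm_nonneg α) _
  have h2 := F_lower hl (s := s + b) (by simp; linarith)
  have h3 : (2 : ℝ) ^ (2 - (s + (b : ℂ)).re) * S2 ≤ 1 / 2 := by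
    refine le_trans ?_ hb
    gcongr
    · norm_num
    · simp; linarith
  rw [Real.exp_neg, ← div_eq_mul_inv, div_le_iff₀ (Real.exp_pos _)]
  linarith

lemma F_ne {xp yp : ℕ → ℤ} (h : Good xp yp) {l : ℕ} (hl : 4 ∣ l) {s : ℂ} (hs : 1 < s.re) : F l s ≠ 0 := by
  obtain ⟨b, hb⟩ := F_lower_unif
  have := hb xp yp h l hl s hs
  intro h0
  rw [h0, norm_zero] at this
  have := Real.exp_pos (-(KK s.re * b))
  linarith

end SACB
namespace SACB
open Complex Metric Set

noncomputable def ang (xp yp : ℕ → ℤ) (p : ℕ) : ℝ := Complex.arg ((xp p : ℂ) + (yp p : ℂ) * I)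

lemma summable_log_nat {σ : ℝ} (hσ : 1 < σ) : Summable fun n : ℕ => Real.log n * (n : ℝ) ^ (-σ) := by
  have hε : 0 < (σ - 1) / 2 := by linarith
  have h := (Real.summable_nat_rpow.mpr (show -((1 + σ) / 2) < -1 by linarith)).mul_left (1 / ((σ - 1) / 2))
  refine Summable.of_nonneg_of_le (fun n => mul_nonneg (Real.log_natCast_nonneg n) (by positivity)) (fun n => ?_) h
  rcases Nat.eq_zero_or_pos n with rfl | hn
  · simp
    positivity
  · have hn' : (0 : ℝ) < n := by exact_mod_cast hn
    calc Real.log n * (n : ℝ) ^ (-σ) ≤ ((n : ℝ) ^ ((σ - 1) / 2) / ((σ - 1) / 2)) * (n : ℝ) ^ (-σ) := by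
          gcongr
          exact Real.log_le_rpow_div hn'.le hε
      _ = 1 / ((σ - 1) / 2) * ((n : ℝ) ^ ((σ - 1) / 2) * (n : ℝ) ^ (-σ)) := by ring
      _ = _ := by rw [← Real.rpow_add hn']; ring_nf

lemma summable_logA {σ : ℝ} (hσ : 1 < σ) : Summable fun p : PA => Real.log p.1 * (p.1 : ℝ) ^ (-σ) :=
  (summable_log_nat hσ).comp_injective Subtype.val_injective

noncomputable def T (xp yp : ℕ → ℤ) (l : ℕ) (u : ℝ) : ℝ :=
  ∑' p : PA, 2 * Real.cos (l * ang xp yp p) * (Real.log p.1 * (p.1 : ℝ) ^ (-(1 + u)))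

lemma summable_T (xp yp : ℕ → ℤ) (l : ℕ) {u : ℝ} (hu : 0 < u) :
    Summable fun p : PA => 2 * Real.cos (l * ang xp yp p) * (Real.log p.1 * (p.1 : ℝ) ^ (-(1 + u))) := by
  refine Summable.of_norm_bounded ((summable_logA (show 1 < 1 + u by linarith)).mul_left 2) fun p => ?_
  have h1 : 0 ≤ Real.log p.1 * (p.1 : ℝ) ^ (-(1 + u)) :=
    mul_nonneg (Real.log_natCast_nonneg _) (by positivity)
  rw [norm_mul, norm_mul, Real.norm_of_nonneg h1, Real.norm_eq_abs, Real.norm_eq_abs]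
  have := Real.abs_cos_le_one (l * ang xp yp p)
  gcongr
  rw [abs_of_pos (by norm_num : (0 : ℝ) < 2)]
  linarith

noncomputable def KB : ℝ := ∑' n : ℕ, 2 * (Real.log n * (n : ℝ) ^ (-2 : ℝ))

lemma re_g_rep {xp yp : ℕ → ℤ} (h : Good xp yp) (l : ℕ) (u : ℝ) (p : PA) :
    (g l (1 + u : ℝ) (rep xp yp (.inl (.inl p)))).re = Real.cos (l * ang xp yp p) * (p.1 : ℝ) ^ (-(1 + u)) ∧
    (g l (1 + u : ℝ) (rep xp yp (.inl (.inr p)))).re = Real.cos (l * ang xp yp p) * (p.1 : ℝ) ^ (-(1 + u)) := by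
  have hp0 : (0 : ℝ) < p.1 := by exact_mod_cast p.2.1.pos
  have hn1 : nm (rep xp yp (.inl (.inl p))) = p.1 := by
    rw [nm, rep_norm h]; simp
  have hn2 : nm (rep xp yp (.inl (.inr p))) = p.1 := by
    rw [nm, rep_norm h]; simp
  have hc1 : ((rep xp yp (.inl (.inl p)) : GaussianInt) : ℂ) = (xp p.1 : ℂ) + (yp p.1 : ℂ) * I := by
    simp [rep, GaussianInt.toComplex_def]
  set z : ℂ := (xp p.1 : ℂ) + (yp p.1 : ℂ) * I with hz
  have hc2 : ((rep xp yp (.inl (.inr p)) : GaussianInt) : ℂ) = (starRingEnd ℂ) z := by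
    simp [rep, GaussianInt.toComplex_def, hz]
  have hz0 : z ≠ 0 := by
    rw [← hc1]
    simpa using (rep_prime h (.inl (.inl p))).ne_zero
  have hzn : (‖z‖ : ℂ) ≠ 0 := by simpa using hz0
  have hexp : cexp (-((1 + u : ℝ) : ℂ) * (Real.log p.1 : ℝ)) = (((p.1 : ℝ) ^ (-(1 + u)) : ℝ) : ℂ) := by
    rw [Real.rpow_def_of_pos hp0]
    push_cast
    ring_nf
  have hdir : z / (‖z‖ : ℂ) = cexp ((ang xp yp p : ℝ) * I) := by
    rw [div_eq_iff hzn, mul_comm]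
    exact (Complex.norm_mul_exp_arg_mul_I z).symm
  have hpow : (z / (‖z‖ : ℂ)) ^ l = cexp (((l * ang xp yp p : ℝ) : ℂ) * I) := by
    rw [hdir, ← exp_nat_mul]
    congr 1
    push_cast; ring
  have hr1 : (cexp (((l * ang xp yp p : ℝ) : ℂ) * I)).re = Real.cos (l * ang xp yp p) :=
    exp_ofReal_mul_I_re _
  constructor
  · rw [g_ne _ _ (rep_prime h _).ne_zero, hn1, hc1, hpow, hexp, re_mul_ofReal, hr1]
  · rw [g_ne _ _ (rep_prime h _).ne_zero, hn2, hc2, hexp, re_mul_ofReal]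
    congr 1
    have : (starRingEnd ℂ) z / ((‖(starRingEnd ℂ) z‖ : ℝ) : ℂ) = (starRingEnd ℂ) (z / (‖z‖ : ℂ)) := by
      rw [map_div₀, Complex.norm_conj, Complex.conj_ofReal]
    rw [this, ← map_pow, conj_re, hpow, hr1]

lemma nm_rep_two {xp yp : ℕ → ℤ} (h : Good xp yp) (i : PI) : 2 ≤ nm (rep xp yp i) := by
  have hp := rep_prime h i
  have h1 : 1 ≤ (rep xp yp i).norm := by have := GaussianInt.norm_pos.mpr hp.ne_zero; omega
  have h2 : (rep xp yp i).norm ≠ 1 := fun hh =>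
    hp.not_isUnit ((Zsqrtd.norm_eq_one_iff' (by norm_num) _).mp hh)
  have : 2 ≤ (rep xp yp i).norm := by omega
  unfold nm; exact_mod_cast this

lemma D_eq_T {xp yp : ℕ → ℤ} (h : Good xp yp) (l : ℕ) {u : ℝ} (hu : 0 < u) :
    |(D xp yp l (1 + u : ℝ)).re - T xp yp l u| ≤ 2 * KK 2 + KB := by
  set s : ℂ := ((1 + u : ℝ) : ℂ) with hsd
  have hsre : s.re = 1 + u := by simp [hsd]
  have hs : 1 < s.re := by rw [hsre]; linarith
  set c : PI → ℝ := fun i => Real.log (nm (rep xp yp i)) with hc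
  have hc0 : ∀ i, 0 ≤ c i := fun i => log_nm_nonneg _
  set x : PI → ℂ := fun i => g l s (rep xp yp i) with hx
  have hxn : ∀ i, ‖x i‖ = nm (rep xp yp i) ^ (-(1 + u)) := fun i => by
    simp only [hx]; rw [norm_g l (by linarith), hsre]
  have hxn1 : ∀ i, ‖x i‖ ≤ nm (rep xp yp i) ^ (-1 : ℝ) := fun i => by
    rw [hxn]
    exact Real.rpow_le_rpow_of_exponent_le (by linarith [nm_rep_two h i]) (by linarith)
  have hxh : ∀ i, ‖x i‖ ≤ 1 / 2 := fun i => by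
    refine (hxn1 i).trans ?_
    rw [Real.rpow_neg_one, one_div]
    exact inv_anti₀ (by norm_num) (nm_rep_two h i)
  -- fiberwise sums
  have h1 : HasSum (fun i => (c i : ℂ) * (x i * (1 - x i)⁻¹)) (D xp yp l s) := by
    refine (hasSum_D h l hs).prod_fiberwise fun i => ?_
    have hg := ((hasSum_geometric_of_norm_lt_one (ξ := x i) (by linarith [hxh i])).mul_left (x i)).mul_left (c i : ℂ)
    refine hg.congr_fun fun k => ?_
    simp only [hc, hx]
    rw [pow_succ']
  have hs0 : Summable (fun i => (c i : ℂ) * x i) := by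
    refine Summable.of_norm_bounded (Dabs0 h (show 1 < 1 + u by linarith)).1 fun i => ?_
    rw [norm_mul, norm_real, Real.norm_of_nonneg (hc0 i), hxn]
  have h2 : ‖D xp yp l s - ∑' i, (c i : ℂ) * x i‖ ≤ 2 * KK 2 := by
    have h3 := h1.sub hs0.hasSum
    rw [← h3.tsum_eq]
    refine (tsum_of_norm_bounded ((Dabs0 h (show (1 : ℝ) < 2 by norm_num)).1.mul_left 2).hasSum fun i => ?_).trans ?_
    · have hne : 1 - x i ≠ 0 := by
        intro h0
        have : x i = 1 := by linear_combination -h0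
        have := hxh i
        rw [‹x i = 1›] at this
        norm_num at this
      have e : (c i : ℂ) * (x i * (1 - x i)⁻¹) - (c i : ℂ) * x i = c i * (x i ^ 2 * (1 - x i)⁻¹) := by
        field_simp; ring
      rw [e, norm_mul, norm_mul, norm_inv, norm_pow, norm_real, Real.norm_of_nonneg (hc0 i)]
      have hlow : 1 / 2 ≤ ‖1 - x i‖ := by
        have := norm_sub_norm_le (1 : ℂ) (x i)
        rw [norm_one] at this
        linarith [hxh i]
      have hinv : ‖1 - x i‖⁻¹ ≤ 2 := by
        rw [inv_le_comm₀ (by linarith) (by norm_num)]; linarith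
      have hsq : ‖x i‖ ^ 2 ≤ nm (rep xp yp i) ^ (-2 : ℝ) := by
        calc ‖x i‖ ^ 2 ≤ (nm (rep xp yp i) ^ (-1 : ℝ)) ^ 2 := by gcongr; exact hxn1 i
          _ = _ := by
            rw [← Real.rpow_natCast, ← Real.rpow_mul (nm_nonneg _)]; norm_num
      have hci := hc0 i
      calc c i * (‖x i‖ ^ 2 * ‖1 - x i‖⁻¹) ≤ c i * (nm (rep xp yp i) ^ (-2 : ℝ) * 2) := by
            gcongr
            exact Real.rpow_nonneg (nm_nonneg _) _
        _ = _ := by simp only [hc]; ring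
    · rw [tsum_mul_left]
      have := (Dabs0 h (show (1 : ℝ) < 2 by norm_num)).2
      linarith
  -- real parts
  have hsr : Summable (fun i => c i * (x i).re) := by
    have := (Complex.hasSum_re hs0.hasSum).summable
    refine this.congr fun i => ?_
    simp
  have hre : (∑' i, (c i : ℂ) * x i).re = ∑' i, c i * (x i).re := by
    rw [Complex.re_tsum hs0]
    exact tsum_congr fun i => by simp
  have hsl : Summable ((fun i => c i * (x i).re) ∘ Sum.inl) := hsr.comp_injective Sum.inl_injective
  have hsrr : Summable ((fun i => c i * (x i).re) ∘ Sum.inr) := hsr.comp_injective Sum.inr_injective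
  have hlogp : ∀ p : PA, c (.inl (.inl p)) = Real.log p.1 ∧ c (.inl (.inr p)) = Real.log p.1 := by
    intro p
    simp only [hc, nm]
    rw [rep_norm h, rep_norm h]
    simp
  have hT : ∑' j : PA ⊕ PA, c (.inl j) * (x (.inl j)).re = T xp yp l u := by
    have e1 : ∀ p : PA, c (.inl (.inl p)) * (x (.inl (.inl p))).re =
        Real.cos (l * ang xp yp p) * (Real.log p.1 * (p.1 : ℝ) ^ (-(1 + u))) := by
      intro p
      rw [(hlogp p).1]; simp only [hx, hsd]; rw [(re_g_rep h l u p).1]; ring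
    have e2 : ∀ p : PA, c (.inl (.inr p)) * (x (.inl (.inr p))).re =
        Real.cos (l * ang xp yp p) * (Real.log p.1 * (p.1 : ℝ) ^ (-(1 + u))) := by
      intro p
      rw [(hlogp p).2]; simp only [hx, hsd]; rw [(re_g_rep h l u p).2]; ring
    have k1 : Summable ((fun j : PA ⊕ PA => c (.inl j) * (x (.inl j)).re) ∘ Sum.inl) :=
      hsl.comp_injective Sum.inl_injective
    have k2 : Summable ((fun j : PA ⊕ PA => c (.inl j) * (x (.inl j)).re) ∘ Sum.inr) :=
      hsl.comp_injective Sum.inr_injective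
    rw [Summable.tsum_sum k1 k2, tsum_congr e1, tsum_congr e2, ← two_mul, ← tsum_mul_left, T]
    exact tsum_congr fun p => by ring
  have hB : |∑' p : PB, c (.inr p) * (x (.inr p)).re| ≤ KB := by
    have hKs : Summable (fun n : ℕ => 2 * (Real.log n * (n : ℝ) ^ (-2 : ℝ))) :=
      (summable_log_nat (by norm_num)).mul_left 2
    have hKB : ∑' p : PB, 2 * (Real.log p.1 * (p.1 : ℝ) ^ (-2 : ℝ)) ≤ KB := by
      refine Summable.tsum_le_tsum_of_inj (fun p : PB => p.1) Subtype.val_injective ?_ (fun p => le_rfl)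
        (hKs.comp_injective Subtype.val_injective) hKs
      intro n _
      have := Real.log_natCast_nonneg n
      positivity
    refine le_trans ?_ hKB
    rw [← Real.norm_eq_abs]
    refine tsum_of_norm_bounded (hKs.comp_injective Subtype.val_injective).hasSum fun p => ?_
    rw [Real.norm_eq_abs, abs_mul, abs_of_nonneg (hc0 _)]
    have a1 : |(x (.inr p)).re| ≤ nm (rep xp yp (.inr p)) ^ (-1 : ℝ) := (Complex.abs_re_le_norm _).trans (hxn1 _)
    have hp0 : (0 : ℝ) < p.1 := by exact_mod_cast p.2.1.pos
    calc c (.inr p) * |(x (.inr p)).re| ≤ c (.inr p) * nm (rep xp yp (.inr p)) ^ (-1 : ℝ) := by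
          have := hc0 (.inr p)
          gcongr
      _ = 2 * (Real.log p.1 * (p.1 : ℝ) ^ (-2 : ℝ)) := by
          simp only [hc, nm]
          rw [rep_norm h]
          simp only
          split_ifs with h2
          · rw [h2]
            push_cast
            rw [Real.rpow_neg_one, Real.rpow_neg (by norm_num)]
            norm_num; ring
          · push_cast
            rw [Real.log_pow, Real.rpow_neg_one, Real.rpow_neg hp0.le]
            norm_cast; ring
  have hfin : ∑' i, c i * (x i).re = T xp yp l u + ∑' p : PB, c (.inr p) * (x (.inr p)).re := by
    rw [Summable.tsum_sum hsl hsrr, hT]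
  have h5 := (Complex.abs_re_le_norm _).trans h2
  rw [sub_re, hre, hfin] at h5
  have h6 := abs_le.mp h5
  have h7 := abs_le.mp hB
  rw [abs_le]
  constructor <;> linarith [h6.1, h6.2, h7.1, h7.2]

noncomputable def T0 (u : ℝ) : ℝ := ∑' p : PA, 2 * (Real.log p.1 * (p.1 : ℝ) ^ (-(1 + u)))

open ArithmeticFunction ArithmeticFunction.vonMangoldt in
lemma T0_le : ∃ C : ℝ, 0 ≤ C ∧ ∀ u : ℝ, 0 < u → u ≤ 1 → T0 u ≤ 1 / u + C := by
  have ha : IsUnit (1 : ZMod 4) := isUnit_one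
  have H {x : ℝ} (hx : 1 < x) :
      ∑' n, residueClass (1 : ZMod 4) n / (n : ℝ) ^ x =
        (LFunctionResidueClassAux (1 : ZMod 4) x).re + ((Nat.totient 4 : ℕ) : ℝ)⁻¹ / (x - 1) := by
    refine ofReal_injective ?_
    simp only [ofReal_tsum, ofReal_div, ofReal_cpow (Nat.cast_nonneg _), ofReal_natCast,
      ofReal_add, ofReal_inv, ofReal_sub, ofReal_one]
    simp_rw [← LFunctionResidueClassAux_real ha hx,
      eqOn_LFunctionResidueClassAux ha <| Set.mem_ofPred.mpr (ofReal_re x ▸ hx), sub_add_cancel,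
      LSeries, LSeries.term]
    refine tsum_congr fun n ↦ ?_
    split_ifs with hn
    · simp only [hn, residueClass_apply_zero, ofReal_zero, zero_div]
    · rfl
  have : ContinuousOn (fun x : ℝ ↦ (LFunctionResidueClassAux (1 : ZMod 4) x).re) (Set.Icc 1 2) :=
    continuous_re.continuousOn.comp (t := Set.univ) (continuousOn_LFunctionResidueClassAux (1 : ZMod 4))
      (fun ⦃x⦄ a ↦ trivial) |>.comp continuous_ofReal.continuousOn fun x hx ↦ by
        simpa only [Set.mem_ofPred_eq, ofReal_re] using hx.1
  obtain ⟨C, hC⟩ := bddAbove_def.mp <| IsCompact.bddAbove_image isCompact_Icc this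
  refine ⟨max 0 (2 * C), le_max_left _ _, fun u hu hu1 => ?_⟩
  have hC' := hC _ (Set.mem_image_of_mem _ (show (1 + u) ∈ Set.Icc (1 : ℝ) 2 from ⟨by linarith, by linarith⟩))
  have hx : 1 < 1 + u := by linarith
  have H1 := H hx
  have htot : Nat.totient 4 = 2 := by decide
  rw [htot] at H1
  have hres : Summable fun n : ℕ => residueClass (1 : ZMod 4) n / (n : ℝ) ^ (1 + u) := by
    refine Summable.of_nonneg_of_le (fun n => div_nonneg (residueClass_nonneg _ n) (by positivity)) (fun n => ?_)
      (summable_log_nat hx)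
    rw [div_eq_mul_inv, ← Real.rpow_neg (Nat.cast_nonneg n)]
    gcongr
    exact (residueClass_le _ n).trans vonMangoldt_le_log
  have h2 : ∑' p : PA, Real.log p.1 * (p.1 : ℝ) ^ (-(1 + u)) ≤ ∑' n, residueClass (1 : ZMod 4) n / (n : ℝ) ^ (1 + u) := by
    refine Summable.tsum_le_tsum_of_inj (fun p : PA => p.1) Subtype.val_injective ?_ ?_ (summable_logA hx) hres
    · intro n _
      exact div_nonneg (residueClass_nonneg _ n) (by positivity)
    · intro p
      have hm : ((p.1 : ℕ) : ZMod 4) = 1 := by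
        have e := (ZMod.natCast_eq_natCast_iff p.1 1 4).mpr p.2.2
        rwa [Nat.cast_one] at e
      have : residueClass (1 : ZMod 4) p.1 = Real.log p.1 := by
        rw [residueClass, Set.indicator_of_mem (by exact hm), vonMangoldt_apply_prime p.2.1]
      rw [this, Real.rpow_neg (Nat.cast_nonneg _), div_eq_mul_inv]
  rw [T0, tsum_mul_left]
  have h3 : (2 : ℝ) * (((2 : ℕ) : ℝ)⁻¹ / (1 + u - 1)) = 1 / u := by
    rw [add_sub_cancel_left]; push_cast; field_simp
  have h4 := le_max_right 0 (2 * C)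
  linarith

end SACB
namespace SACB
open Complex Metric Set

lemma list_sum_re (Z : List ℂ) (f : ℂ → ℂ) : ((Z.map f).sum).re = (Z.map (fun ρ => (f ρ).re)).sum := by
  induction Z with
  | nil => simp
  | cons a Z ih => simp [ih]

lemma KB_nonneg : 0 ≤ KB := by
  refine tsum_nonneg fun n => ?_
  have := Real.log_natCast_nonneg n
  positivity

lemma one_le_log {l : ℕ} (hl : 4 ≤ l) : 1 ≤ Real.log l := by
  have hl' : (4 : ℝ) ≤ l := by exact_mod_cast hl
  rw [Real.le_log_iff_exp_le (by linarith)]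
  linarith [Real.exp_one_lt_d9]

lemma G_ne {xp yp : ℕ → ℤ} (h : Good xp yp) {l : ℕ} (hl : 4 ∣ l) (hl4 : 4 ≤ l) {s : ℂ} (hs : 1 < s.re) :
    G l s ≠ 0 := by
  rw [G_eq l hs]
  exact mul_ne_zero (E_ne (by omega) hs) (F_ne h hl hs)

lemma G_logDeriv {xp yp : ℕ → ℤ} (h : Good xp yp) {l : ℕ} (hl : 4 ∣ l) (hl4 : 4 ≤ l) {s : ℂ} (hs : 1 < s.re) :
    deriv (G l) s / G l s = deriv (E l) s / E l s - D xp yp l s := by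
  have hev : G l =ᶠ[nhds s] fun z => E l z * F l z := by
    filter_upwards [(isOpen_lt continuous_const continuous_re).mem_nhds hs] with z hz
    exact G_eq l hz
  have hE := E_ne (l := l) (by omega) hs
  have hF := F_ne h hl hs
  have hd : deriv (G l) s = deriv (E l) s * F l s + E l s * (-(D xp yp l s * F l s)) := by
    rw [hev.deriv_eq]
    have h1 := (hasDerivAt_E l s).mul (deriv_F h l hs)
    rw [(hasDerivAt_E l s).deriv]
    exact h1.deriv
  have hG : G l s = E l s * F l s := G_eq l hs
  rw [hd, hG]
  field_simp
  ring

lemma T_zeros : ∃ K1 : ℝ, 0 ≤ K1 ∧ ∀ xp yp : ℕ → ℤ, Good xp yp → ∀ l : ℕ, 4 ∣ l → 4 ≤ l →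
    ∃ Z : List ℂ, (∀ ρ ∈ Z, ρ.re ≤ 1) ∧ ∀ u : ℝ, 0 < u → u ≤ 1 / 32 →
      |T xp yp l u + (Z.map (fun ρ => (1 / (((1 + u : ℝ) : ℂ) - ρ)).re)).sum| ≤ K1 * Real.log l := by
  obtain ⟨C0, hC0, hGle⟩ := norm_G_le
  obtain ⟨b, hb⟩ := F_lower_unif
  set c : ℝ := 1 / 2 * Real.exp (-(KK (33 / 32) * b)) with hc
  have hcp : 0 < c := by positivity
  set M1 : ℝ := 8 + |Real.log (2 * C0 / c)| with hM1
  have hM1p : 0 < M1 := by positivity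
  refine ⟨2 * KK 2 + KB + 6 + 384 * M1, by have := KK_nonneg 2; have := KB_nonneg; positivity, ?_⟩
  intro xp yp h l hl hl4
  have hl1 := one_le_log hl4
  have hlp : (0 : ℝ) < l := by positivity
  set s0 : ℂ := ((1 + 1 / 32 : ℝ) : ℂ) with hs0
  have hs0re : s0.re = 33 / 32 := by simp [hs0]; norm_num
  have hs0n : ‖s0‖ = 33 / 32 := by rw [hs0, norm_real, Real.norm_of_nonneg (by norm_num)]; norm_num
  have hreg : ∀ s ∈ ball s0 (6 * (1 / 32)), 3 / 4 < s.re ∧ ‖s‖ < 4 := by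
    intro s hs
    rw [mem_ball_iff_norm] at hs
    constructor
    · have := abs_le.mp ((Complex.abs_re_le_norm _).trans hs.le)
      rw [sub_re, hs0re] at this
      linarith [this.1]
    · have := norm_sub_norm_le s s0
      rw [hs0n] at this
      linarith
  have hG0 : c / 2 ≤ ‖G l s0‖ := by
    rw [G_eq l (by rw [hs0re]; norm_num), norm_mul]
    have h1 := E_lower hl4 (u := 1 / 32) (by norm_num)
    have h2 := hb xp yp h l hl s0 (by rw [hs0re]; norm_num)
    rw [hs0re, ← hc] at h2
    rw [← hs0] at h1
    unfold E at h1
    calc c / 2 = 1 / 2 * c := by ring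
      _ ≤ _ := by gcongr
  have hM : 0 < M1 * Real.log l := by positivity
  have hbd : ∀ s ∈ closedBall s0 (5 * (1 / 32)), ‖G l s‖ ≤ Real.exp (M1 * Real.log l) * ‖G l s0‖ := by
    intro s hs
    have hs' := hreg s (closedBall_subset_ball (by norm_num) hs)
    refine (hGle l hl4 s hs'.1 hs'.2).trans ?_
    have h1 : C0 * (l : ℝ) ^ 8 ≤ Real.exp (M1 * Real.log l) * (c / 2) := by
      have h2 : Real.log (2 * C0 / c) + 8 * Real.log l ≤ M1 * Real.log l := by
        rw [hM1, add_mul]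
        have := le_abs_self (Real.log (2 * C0 / c))
        nlinarith [abs_nonneg (Real.log (2 * C0 / c))]
      have h3 := Real.exp_le_exp.mpr h2
      rw [Real.exp_add, Real.exp_log (by positivity)] at h3
      have h4 : Real.exp (8 * Real.log l) = (l : ℝ) ^ 8 := by
        have : (8 : ℝ) * Real.log l = Real.log ((l : ℝ) ^ 8) := by rw [Real.log_pow]; norm_num
        rw [this, Real.exp_log (by positivity)]
      rw [h4] at h3
      calc C0 * (l : ℝ) ^ 8 = (2 * C0 / c * (l : ℝ) ^ 8) * (c / 2) := by field_simp
        _ ≤ _ := by gcongr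
    refine h1.trans ?_
    gcongr
  obtain ⟨Z, hZ1, hZ2⟩ := landau (G := G l) (s0 := s0) (R := 1 / 32) (M := M1 * Real.log l) (by norm_num) hM
    ((differentiableOn_G l).mono fun s hs => ⟨(hreg s hs).1, mem_ball_zero_iff.mpr (hreg s hs).2⟩)
    (G_ne h hl hl4 (by rw [hs0re]; norm_num)) hbd
  refine ⟨Z, ?_, ?_⟩
  · intro ρ hρ
    by_contra hc
    push Not at hc
    exact G_ne h hl hl4 hc (hZ1 ρ hρ).2
  · intro u hu hu1
    have hs : 1 < (((1 + u : ℝ) : ℂ)).re := by simp; exact hu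
    have h1 := hZ2 ((1 + u : ℝ) : ℂ) (by
      rw [mem_closedBall_iff_norm, hs0, ← ofReal_sub, norm_real, Real.norm_eq_abs, abs_le]
      constructor <;> linarith) (G_ne h hl hl4 hs)
    rw [G_logDeriv h hl hl4 hs] at h1
    have h2 := (Complex.abs_re_le_norm _).trans h1
    rw [sub_re, sub_re, list_sum_re] at h2
    have h3 := (Complex.abs_re_le_norm _).trans (E_logDeriv hl4 hu)
    have h4 := D_eq_T h l hu
    have h2' := abs_le.mp h2
    have h3' := abs_le.mp h3
    have h4' := abs_le.mp h4
    have e : 12 * (M1 * Real.log l) / (1 / 32) = 384 * M1 * Real.log l := by ring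
    rw [e] at h2'
    have h5 : 2 * KK 2 + KB ≤ (2 * KK 2 + KB) * Real.log l := by
      have := KK_nonneg 2; have := KB_nonneg
      nlinarith
    have e2 : (2 * KK 2 + KB + 6 + 384 * M1) * Real.log l = (2 * KK 2 + KB) * Real.log l + 6 * Real.log l + 384 * M1 * Real.log l := by ring
    rw [e2, abs_le]
    constructor <;> linarith [h2'.1, h2'.2, h3'.1, h3'.2, h4'.1, h4'.2]

lemma three_four_one (xp yp : ℕ → ℤ) (l : ℕ) {u : ℝ} (hu : 0 < u) :
    0 ≤ 3 * T0 u + 4 * T xp yp l u + T xp yp (2 * l) u := by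
  have s1 : Summable fun p : PA => 2 * (Real.log p.1 * (p.1 : ℝ) ^ (-(1 + u))) :=
    (summable_logA (show 1 < 1 + u by linarith)).mul_left 2
  have s2 := summable_T xp yp l hu
  have s3 := summable_T xp yp (2 * l) hu
  have := ((s1.hasSum.mul_left 3).add (s2.hasSum.mul_left 4)).add s3.hasSum
  unfold T0 T
  rw [← this.tsum_eq]
  refine tsum_nonneg fun p => ?_
  have h1 : 0 ≤ Real.log p.1 * (p.1 : ℝ) ^ (-(1 + u)) :=
    mul_nonneg (Real.log_natCast_nonneg _) (by positivity)
  have h2 : Real.cos (((2 * l : ℕ) : ℝ) * ang xp yp p) = 2 * Real.cos (l * ang xp yp p) ^ 2 - 1 := by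
    rw [← Real.cos_two_mul]; push_cast; ring_nf
  rw [h2]
  have h3 : 0 ≤ (Real.cos (l * ang xp yp p) + 1) ^ 2 * (Real.log p.1 * (p.1 : ℝ) ^ (-(1 + u))) := by positivity
  nlinarith

lemma T_bound : ∃ K : ℝ, 0 ≤ K ∧ ∀ xp yp : ℕ → ℤ, Good xp yp → ∀ l : ℕ, 4 ∣ l → 4 ≤ l →
    ∀ u : ℝ, 0 < u → u ≤ 1 / 32 → |T xp yp l u| ≤ K * Real.log l := by
  obtain ⟨K1, hK1, hT⟩ := T_zeros
  obtain ⟨C, hC, hT0⟩ := T0_le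
  refine ⟨K1 + 500 * (C + 2 * K1 + 4), by positivity, ?_⟩
  intro xp yp h l hl hl4 u hu hu1
  have hl1 := one_le_log hl4
  have hup : ∀ m : ℕ, 4 ∣ m → 4 ≤ m → ∀ u, 0 < u → u ≤ 1 / 32 → T xp yp m u ≤ K1 * Real.log m := by
    intro m hm hm4 u hu hu1
    obtain ⟨Z, hZ, hb⟩ := hT xp yp h m hm hm4
    have h1 := (abs_le.mp (hb u hu hu1)).2
    have h2 : 0 ≤ (Z.map (fun ρ => (1 / (((1 + u : ℝ) : ℂ) - ρ)).re)).sum := by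
      apply List.sum_nonneg
      intro x hx
      obtain ⟨ρ, hρ, rfl⟩ := List.mem_map.mp hx
      rw [one_div, inv_re]
      apply div_nonneg _ (normSq_nonneg _)
      rw [sub_re, ofReal_re]
      linarith [hZ ρ hρ]
    linarith
  obtain ⟨Z, hZ, hb⟩ := hT xp yp h l hl hl4
  have hlog2 : Real.log ((2 * l : ℕ) : ℝ) ≤ 2 * Real.log l := by
    have hl' : (4 : ℝ) ≤ l := by exact_mod_cast hl4
    have : (2 : ℝ) * Real.log l = Real.log ((l : ℝ) ^ 2) := by rw [Real.log_pow]; norm_num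
    rw [this]
    apply Real.log_le_log (by positivity)
    push_cast; nlinarith
  have hlow : ∀ u, 0 < u → u ≤ 1 / 32 →
      (Z.map (fun ρ => (1 / (((1 + u : ℝ) : ℂ) - ρ)).re)).sum ≤ 3 / 4 / u + (C + 2 * K1 + 4) * Real.log l := by
    intro u hu hu1
    have h1 := three_four_one xp yp l hu
    have h2 := hT0 u hu (by linarith)
    have h3 := hup (2 * l) (hl.mul_left 2) (by omega) u hu hu1
    have h4 := (abs_le.mp (hb u hu hu1)).2
    have h5 : T xp yp (2 * l) u ≤ 2 * K1 * Real.log l := by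
      refine h3.trans ?_
      nlinarith
    have h6 : 3 / 4 / u = 3 / 4 * (1 / u) := by ring
    rw [h6]
    nlinarith
  have hrep := zero_repulsion (K := (C + 2 * K1 + 4) * Real.log l) (by nlinarith) hZ hlow u hu hu1
  have h4 := (abs_le.mp (hb u hu hu1)).1
  have h7 := hup l hl hl4 u hu hu1
  rw [abs_le]
  constructor
  · nlinarith
  · have : 0 ≤ 500 * (C + 2 * K1 + 4) * Real.log l := by positivity
    nlinarith

end SACB
namespace SACB
open Complex Metric Set

noncomputable def fc (n : ℤ) : ℝ := Real.cos (n * Real.pi) / Real.pi * (2 / (1 - 4 * (n : ℝ) ^ 2))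

lemma fc_zero : fc 0 = 2 / Real.pi := by
  simp [fc]; ring

lemma fc_le {n : ℤ} (hn : n ≠ 0) : |fc n| ≤ 1 / (n : ℝ) ^ 2 := by
  have h1 : (1 : ℝ) ≤ (n : ℝ) ^ 2 := by
    have : (1 : ℤ) ≤ n ^ 2 := by
      have := sq_pos_of_ne_zero hn  
      omega
    exact_mod_cast this
  have h2 := Real.abs_cos_le_one (n * Real.pi)
  have h3 := Real.pi_gt_three
  unfold fc
  rw [abs_mul, abs_div, abs_div, abs_of_pos Real.pi_pos, abs_of_neg (show 1 - 4 * (n : ℝ) ^ 2 < 0 by linarith)]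
  rw [abs_of_pos (by norm_num : (0 : ℝ) < 2)]
  calc _ ≤ 1 / 1 * (2 / -(1 - 4 * (n : ℝ) ^ 2)) := by
        have : 0 ≤ 2 / -(1 - 4 * (n : ℝ) ^ 2) := div_nonneg (by norm_num) (by linarith)
        gcongr
        linarith
    _ ≤ _ := by
        rw [div_one, one_mul, div_le_div_iff₀ (by linarith) (by linarith)]
        linarith

lemma summable_fc : Summable fc := by
  have h := (Real.summable_one_div_int_pow (p := 2)).mpr (by norm_num)
  have h2 : Summable (fun n : ℤ => 1 / (n : ℝ) ^ 2 + if n = 0 then 2 / Real.pi else 0) :=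
    h.add ((hasSum_ite_eq 0 _).summable)
  refine Summable.of_norm_bounded h2 fun n => ?_
  rcases eq_or_ne n 0 with rfl | hn
  · rw [fc_zero]; simp [abs_of_pos Real.pi_pos]
  · simpa [hn] using fc_le hn

lemma integral_aux (n : ℤ) : ∫ x in (-(Real.pi / 2))..(Real.pi / 2),
    Complex.exp (-(2 * n * x * I)) * Complex.cos x = (Real.pi * fc n : ℝ) := by
  have hodd1 : ((1 : ℂ) - 2 * n) ≠ 0 := by
    have : (1 - 2 * n : ℤ) ≠ 0 := by omega
    exact_mod_cast this
  have hodd2 : ((1 : ℂ) + 2 * n) ≠ 0 := by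
    have : (1 + 2 * n : ℤ) ≠ 0 := by omega
    exact_mod_cast this
  have c1 : (1 - 2 * n : ℂ) * I ≠ 0 := mul_ne_zero hodd1 I_ne_zero
  have c2 : -(1 + 2 * n : ℂ) * I ≠ 0 := mul_ne_zero (neg_ne_zero.mpr hodd2) I_ne_zero
  have e : ∀ x : ℝ, Complex.exp (-(2 * n * x * I)) * Complex.cos x =
      (1 / 2) * Complex.exp ((1 - 2 * n : ℂ) * I * x) + (1 / 2) * Complex.exp (-(1 + 2 * n : ℂ) * I * x) := by
    intro x
    rw [Complex.cos]
    rw [show (1 - 2 * n : ℂ) * I * x = -(2 * n * x * I) + x * I by ring, 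
      show -(1 + 2 * n : ℂ) * I * x = -(2 * n * x * I) + -x * I by ring, Complex.exp_add, Complex.exp_add]
    ring
  simp_rw [e]
  rw [intervalIntegral.integral_add, intervalIntegral.integral_const_mul, intervalIntegral.integral_const_mul,
    integral_exp_mul_complex c1, integral_exp_mul_complex c2]
  · have s1 : Complex.sin ((1 - 2 * n : ℂ) * (Real.pi / 2)) = Complex.cos (n * Real.pi) := by
      rw [show (1 - 2 * n : ℂ) * (Real.pi / 2) = Real.pi / 2 - n * Real.pi by ring, Complex.sin_pi_div_two_sub]
    have s2 : Complex.sin ((1 + 2 * n : ℂ) * (Real.pi / 2)) = Complex.cos (n * Real.pi) := by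
      rw [show (1 + 2 * n : ℂ) * (Real.pi / 2) = n * Real.pi + Real.pi / 2 by ring, Complex.sin_add_pi_div_two]
    have h3 : (1 : ℂ) - 4 * n ^ 2 ≠ 0 := by
      rw [show (1 : ℂ) - 4 * n ^ 2 = (1 - 2 * n) * (1 + 2 * n) by ring]
      exact mul_ne_zero hodd1 hodd2
    have hpi : (Real.pi : ℂ) ≠ 0 := by exact_mod_cast Real.pi_ne_zero
    have key : (Real.pi * fc n : ℝ) = Complex.cos (n * Real.pi) * (1 / (1 - 2 * n) + 1 / (1 + 2 * n)) := by
      unfold fc; push_cast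
      have : (1 / (1 - 2 * n) + 1 / (1 + 2 * n) : ℂ) = 2 / (1 - 4 * n ^ 2) := by
        rw [show (1 : ℂ) - 4 * n ^ 2 = (1 - 2 * n) * (1 + 2 * n) by ring]
        field_simp
        ring
      rw [this]
      field_simp
    rw [key, mul_add]
    nth_rewrite 1 [← s1]
    rw [← s2, Complex.sin, Complex.sin]
    push_cast
    have r1 : (1 - 2 * n : ℂ) * I * (Real.pi / 2) = (1 - 2 * n) * (Real.pi / 2) * I := by ring
    have r2 : (1 - 2 * n : ℂ) * I * -(Real.pi / 2) = -((1 - 2 * n) * (Real.pi / 2)) * I := by ring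
    have r3 : -(1 + 2 * n : ℂ) * I * (Real.pi / 2) = -((1 + 2 * n) * (Real.pi / 2)) * I := by ring
    have r4 : -(1 + 2 * n : ℂ) * I * -(Real.pi / 2) = (1 + 2 * n) * (Real.pi / 2) * I := by ring
    rw [r1, r2, r3, r4]
    generalize Complex.exp ((1 - 2 * n) * (Real.pi / 2) * I) = A
    generalize Complex.exp (-((1 - 2 * n) * (Real.pi / 2)) * I) = B
    generalize Complex.exp ((1 + 2 * n) * (Real.pi / 2) * I) = A'
    generalize Complex.exp (-((1 + 2 * n) * (Real.pi / 2)) * I) = B'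
    rw [neg_mul, div_neg]
    field_simp
    rw [I_sq]
    ring
  · exact Continuous.intervalIntegrable (by fun_prop) _ _
  · exact Continuous.intervalIntegrable (by fun_prop) _ _

lemma abscos_periodic : Function.Periodic (fun θ : ℝ => ((|Real.cos θ| : ℝ) : ℂ)) Real.pi := by
  intro θ
  simp [Real.cos_add_pi]

lemma abscos_fourier (θ : ℝ) : HasSum (fun n : ℤ => fc n * Real.cos (2 * n * θ)) |Real.cos θ| := by
  haveI : Fact (0 < Real.pi) := ⟨Real.pi_pos⟩
  let f : C(AddCircle Real.pi, ℂ) := ⟨abscos_periodic.lift, by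
    refine continuous_coinduced_dom.mpr ?_
    show Continuous (fun θ : ℝ => ((|Real.cos θ| : ℝ) : ℂ))
    fun_prop⟩
  have hf : ∀ x : ℝ, f (x : AddCircle Real.pi) = ((|Real.cos x| : ℝ) : ℂ) := fun x => rfl
  have hpi : (Real.pi : ℂ) ≠ 0 := by exact_mod_cast Real.pi_ne_zero
  have hexp : ∀ (n : ℤ) (x : ℝ), (fourier n (x : AddCircle Real.pi) : ℂ) = Complex.exp (2 * n * x * I) := by
    intro n x
    rw [fourier_coe_apply]
    congr 1
    field_simp
  have hc : ∀ n, fourierCoeff f n = fc n := by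
    intro n
    rw [fourierCoeff_eq_intervalIntegral f n (-(Real.pi / 2))]
    rw [show -(Real.pi / 2) + Real.pi = Real.pi / 2 by ring]
    have : ∫ x in (-(Real.pi / 2))..(Real.pi / 2), (fourier (-n) (x : AddCircle Real.pi) : ℂ) • f x =
        ∫ x in (-(Real.pi / 2))..(Real.pi / 2), Complex.exp (-(2 * n * x * I)) * Complex.cos x := by
      refine intervalIntegral.integral_congr fun x hx => ?_
      rw [uIcc_of_le (by linarith [Real.pi_pos])] at hx
      simp only [hexp, hf, smul_eq_mul]
      rw [abs_of_nonneg (Real.cos_nonneg_of_neg_pi_div_two_le_of_le hx.1 hx.2), Complex.ofReal_cos]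
      push_cast
      congr 2
      ring
    rw [this, integral_aux]
    rw [Complex.real_smul]
    push_cast
    field_simp
  have hs : Summable (fourierCoeff f) := by
    have : fourierCoeff f = fun n => ((fc n : ℝ) : ℂ) := funext hc
    rw [this]
    exact Complex.ofRealCLM.summable summable_fc
  have := has_pointwise_sum_fourier_series_of_summable hs (θ : AddCircle Real.pi)
  have h2 := Complex.hasSum_re this
  rw [hf, Complex.ofReal_re] at h2
  refine h2.congr_fun fun n => ?_
  rw [hc, hexp, smul_eq_mul, Complex.re_ofReal_mul]
  congr 1
  rw [show (2 * n * θ * I : ℂ) = ((2 * n * θ : ℝ) : ℂ) * I by push_cast; ring, Complex.exp_ofReal_mul_I_re]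

end SACB
namespace SACB
open Complex Metric Set

lemma PA_pos (p : PA) : (0 : ℝ) < p.1 := by exact_mod_cast p.2.1.pos

lemma PA_one_le (p : PA) : (1 : ℝ) ≤ p.1 := by exact_mod_cast p.2.1.one_le

lemma summable_PA {u : ℝ} (hu : 0 < u) : Summable fun p : PA => (p.1 : ℝ) ^ (-(1 + u)) :=
  (Real.summable_nat_rpow.mpr (show -(1 + u) < -1 by linarith)).comp_injective Subtype.val_injective

noncomputable def Sw (w : PA → ℝ) (u : ℝ) : ℝ := ∑' p : PA, w p * (p.1 : ℝ) ^ (-(1 + u))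

lemma summable_Sw {w : PA → ℝ} (hw : ∀ p, |w p| ≤ 1) {u : ℝ} (hu : 0 < u) :
    Summable fun p : PA => w p * (p.1 : ℝ) ^ (-(1 + u)) := by
  refine Summable.of_norm_bounded (summable_PA hu) fun p => ?_
  have : 0 ≤ (p.1 : ℝ) ^ (-(1 + u)) := by positivity
  rw [norm_mul, Real.norm_eq_abs, Real.norm_of_nonneg this]
  exact mul_le_of_le_one_left this (hw p)

lemma hasDerivAt_Sw {w : PA → ℝ} (hw : ∀ p, |w p| ≤ 1) {u : ℝ} (hu : 0 < u) :
    HasDerivAt (Sw w) (∑' p : PA, -(w p * (Real.log p.1 * (p.1 : ℝ) ^ (-(1 + u))))) u := by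
  refine hasDerivAt_tsum_of_isPreconnected (t := Ioi (u / 2))
    (g := fun (p : PA) (u : ℝ) => w p * (p.1 : ℝ) ^ (-(1 + u)))
    (g' := fun (p : PA) (u : ℝ) => -(w p * (Real.log p.1 * (p.1 : ℝ) ^ (-(1 + u)))))
    (summable_logA (show 1 < 1 + u / 2 by linarith)) isOpen_Ioi
    isPreconnected_Ioi ?_ ?_ (y₀ := u) (by simp only [mem_Ioi]; linarith) (summable_Sw hw hu)
    (by simp only [mem_Ioi]; linarith)
  · intro p y _
    have h1 : HasDerivAt (fun u : ℝ => -(1 + u)) (-1) y := ((hasDerivAt_id y).const_add 1).neg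
    have h2 := h1.const_rpow (PA_pos p)
    exact (h2.const_mul (w p)).congr_deriv (by ring)
  · intro p y hy
    have h3 : 0 ≤ Real.log p.1 := Real.log_natCast_nonneg _
    have h4 : 0 ≤ Real.log p.1 * (p.1 : ℝ) ^ (-(1 + y)) := by positivity
    rw [norm_neg, norm_mul, Real.norm_eq_abs, Real.norm_of_nonneg h4]
    refine (mul_le_of_le_one_left h4 (hw p)).trans ?_
    refine mul_le_mul_of_nonneg_left ?_ h3
    refine Real.rpow_le_rpow_of_exponent_le (PA_one_le p) ?_
    have : u / 2 < y := hy
    linarith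

lemma S_diff : ∃ K : ℝ, 0 ≤ K ∧ ∀ xp yp : ℕ → ℤ, Good xp yp → ∀ l : ℕ, 4 ∣ l → 4 ≤ l →
    ∀ u v : ℝ, 0 < u → u ≤ v → v ≤ 1 / 32 →
      |Sw (fun p => Real.cos (l * ang xp yp p)) u - Sw (fun p => Real.cos (l * ang xp yp p)) v| ≤
        K * Real.log l * v := by
  obtain ⟨K, hK, hT⟩ := T_bound
  refine ⟨K, hK, ?_⟩
  intro xp yp hg l hl hl4 u v hu huv hv
  have hw : ∀ p : PA, |(fun p : PA => Real.cos (l * ang xp yp p)) p| ≤ 1 := fun p => Real.abs_cos_le_one _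
  have hl1 := one_le_log hl4
  have key := Convex.norm_image_sub_le_of_norm_hasDerivWithin_le (s := Icc u v) (C := K * Real.log l)
    (f := Sw (fun p => Real.cos (l * ang xp yp p)))
    (f' := fun y => ∑' p : PA, -(Real.cos (l * ang xp yp p) * (Real.log p.1 * (p.1 : ℝ) ^ (-(1 + y)))))
    (x := v) (y := u) (fun y hy => (hasDerivAt_Sw hw (lt_of_lt_of_le hu hy.1)).hasDerivWithinAt) ?_
    (convex_Icc u v) ⟨huv, le_rfl⟩ ⟨le_rfl, huv⟩
  · rw [Real.norm_eq_abs, Real.norm_eq_abs] at key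
    refine key.trans ?_
    refine mul_le_mul_of_nonneg_left ?_ (by positivity)
    rw [abs_le]; constructor <;> linarith
  · intro y hy
    have h1 := hT xp yp hg l hl hl4 y (lt_of_lt_of_le hu hy.1) (hy.2.trans hv)
    have h2 : ∑' p : PA, -(Real.cos (l * ang xp yp p) * (Real.log p.1 * (p.1 : ℝ) ^ (-(1 + y)))) =
        (-(1 / 2)) * T xp yp l y := by
      unfold T
      rw [← tsum_mul_left]
      refine tsum_congr fun p => ?_
      ring
    rw [h2, norm_mul, Real.norm_eq_abs, Real.norm_eq_abs, abs_neg, abs_of_pos (by norm_num : (0 : ℝ) < 1 / 2)]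
    have := abs_nonneg (T xp yp l y)
    linarith

lemma S0_diff : ∃ C : ℝ, 0 ≤ C ∧ ∀ u v : ℝ, 0 < u → u ≤ v → v ≤ 1 →
      Sw (fun _ => 1) u - Sw (fun _ => 1) v ≤ (1 / 2) * (Real.log v - Real.log u) + C := by
  obtain ⟨C, hC, hT⟩ := T0_le
  refine ⟨C, hC, ?_⟩
  intro u v hu huv hv
  have hw : ∀ p : PA, |(fun _ : PA => (1 : ℝ)) p| ≤ 1 := fun p => by simp
  have hd : ∀ y ∈ Icc u v, HasDerivAt (fun y => Sw (fun _ => 1) y + (1 / 2) * Real.log y + (C / 2) * y)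
      (∑' p : PA, -(1 * (Real.log p.1 * (p.1 : ℝ) ^ (-(1 + y)))) + (1 / 2) * y⁻¹ + (C / 2) * 1) y := by
    intro y hy
    have hy0 : 0 < y := lt_of_lt_of_le hu hy.1
    exact ((hasDerivAt_Sw hw hy0).add ((Real.hasDerivAt_log hy0.ne').const_mul _)).add
      ((hasDerivAt_id y).const_mul _)
  have hm : MonotoneOn (fun y => Sw (fun _ => 1) y + (1 / 2) * Real.log y + (C / 2) * y) (Icc u v) := by
    refine monotoneOn_of_deriv_nonneg (convex_Icc u v) (fun y hy => (hd y hy).continuousAt.continuousWithinAt)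
      (fun y hy => (hd y (interior_subset hy)).differentiableAt.differentiableWithinAt) ?_
    intro y hy
    have hy2 := interior_subset hy
    have hy0 : 0 < y := lt_of_lt_of_le hu hy2.1
    rw [(hd y hy2).deriv]
    have h1 := hT y hy0 (hy2.2.trans hv)
    have h2 : ∑' p : PA, -(1 * (Real.log p.1 * (p.1 : ℝ) ^ (-(1 + y)))) = (-(1 / 2)) * T0 y := by
      unfold T0
      rw [← tsum_mul_left]
      refine tsum_congr fun p => ?_
      ring
    rw [h2]
    rw [one_div] at h1
    linarith
  have := hm ⟨le_rfl, huv⟩ ⟨huv, le_rfl⟩ huv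
  simp only at this
  nlinarith

lemma S0_le : ∃ C : ℝ, 0 ≤ C ∧ ∀ u : ℝ, 0 < u → u ≤ 1 →
      Sw (fun _ => 1) u ≤ (1 / 2) * (- Real.log u) + C := by
  obtain ⟨C, hC, h⟩ := S0_diff
  have h0 : 0 ≤ Sw (fun _ => 1) 1 := tsum_nonneg fun p => by positivity
  refine ⟨C + Sw (fun _ => 1) 1, by positivity, fun u hu hu1 => ?_⟩
  have := h u 1 hu hu1 le_rfl
  rw [Real.log_one] at this
  linarith

lemma cutoff : ∃ C : ℝ, 0 ≤ C ∧ ∀ w : PA → ℝ, (∀ p, 0 ≤ w p) → (∀ p, w p ≤ 1) → ∀ x : ℝ, Real.exp 1 ≤ x →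
    ∀ s : Finset PA, (∀ p ∈ s, (p.1 : ℝ) ≤ x) →
      ∑ p ∈ s, w p / (p.1 : ℝ) ≤ Sw w (1 / Real.log x) + C := by
  obtain ⟨C, hC, hT⟩ := T0_le
  refine ⟨Real.exp 1 * (1 + C), by positivity, ?_⟩
  intro w hw0 hw1 x hx s hs
  have hx0 : 0 < x := lt_of_lt_of_le (Real.exp_pos 1) hx
  have hL : 1 ≤ Real.log x := by rwa [Real.le_log_iff_exp_le hx0]
  set d := 1 / Real.log x with hd
  have hd0 : 0 < d := by positivity
  have hd1 : d ≤ 1 := by rw [hd, div_le_one (by linarith)]; exact hL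
  have hwa : ∀ p, |w p| ≤ 1 := fun p => by rw [abs_of_nonneg (hw0 p)]; exact hw1 p
  have t : ∀ p ∈ s, w p / (p.1 : ℝ) ≤ w p * (p.1 : ℝ) ^ (-(1 + d)) +
      d * Real.exp 1 * (Real.log p.1 * (p.1 : ℝ) ^ (-(1 + d))) := by
    intro p hp
    have hp0 := PA_pos p
    have hlp : 0 ≤ Real.log p.1 := Real.log_natCast_nonneg _
    have e1 : (p.1 : ℝ) ^ (-(1 + d)) = (1 / p.1) * Real.exp (-(d * Real.log p.1)) := by
      rw [neg_add, Real.rpow_add hp0, Real.rpow_neg_one, one_div, Real.rpow_def_of_pos hp0]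
      congr 2; ring
    have h1 : 1 - d * Real.log p.1 ≤ Real.exp (-(d * Real.log p.1)) := by
      have := Real.add_one_le_exp (-(d * Real.log p.1)); linarith
    have h2 : d * Real.log p.1 ≤ 1 := by
      rw [hd, one_div, inv_mul_le_iff₀ (by linarith), mul_one]
      exact Real.log_le_log hp0 (hs p hp)
    have h3 : 1 ≤ Real.exp 1 * Real.exp (-(d * Real.log p.1)) := by
      rw [← Real.exp_add]; exact Real.one_le_exp (by linarith)
    rw [e1]
    have h4 : w p ≤ w p * Real.exp (-(d * Real.log p.1)) + d * Real.exp 1 * (Real.log p.1 * Real.exp (-(d * Real.log p.1))) := by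
      have a1 : w p * (1 - Real.exp (-(d * Real.log p.1))) ≤ 1 * (d * Real.log p.1) := by
        have : 0 ≤ d * Real.log p.1 := by positivity
        have h5 : Real.exp (-(d * Real.log p.1)) ≤ 1 := Real.exp_le_one_iff.mpr (by linarith)
        exact mul_le_mul (hw1 p) (by linarith) (by linarith) (by norm_num)
      have a2 : (d * Real.log p.1) * 1 ≤ (d * Real.log p.1) * (Real.exp 1 * Real.exp (-(d * Real.log p.1))) :=
        mul_le_mul_of_nonneg_left h3 (by positivity)
      nlinarith
    have := mul_le_mul_of_nonneg_left h4 (show 0 ≤ 1 / (p.1 : ℝ) by positivity)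
    calc w p / (p.1 : ℝ) = 1 / (p.1 : ℝ) * w p := by ring
      _ ≤ _ := this
      _ = _ := by ring
  have s1 := summable_Sw hwa hd0
  have s2 := summable_logA (show 1 < 1 + d by linarith)
  have b1 : ∑ p ∈ s, w p * (p.1 : ℝ) ^ (-(1 + d)) ≤ Sw w d :=
    s1.sum_le_tsum s (fun p _ => mul_nonneg (hw0 p) (by positivity))
  have b2 : ∑ p ∈ s, Real.log p.1 * (p.1 : ℝ) ^ (-(1 + d)) ≤ (1 / 2) * T0 d := by
    refine (s2.sum_le_tsum s (fun p _ => mul_nonneg (Real.log_natCast_nonneg _) (by positivity))).trans (le_of_eq ?_)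
    unfold T0
    rw [tsum_mul_left]; ring
  calc _ ≤ ∑ p ∈ s, (w p * (p.1 : ℝ) ^ (-(1 + d)) +
      d * Real.exp 1 * (Real.log p.1 * (p.1 : ℝ) ^ (-(1 + d)))) := Finset.sum_le_sum t
    _ = ∑ p ∈ s, w p * (p.1 : ℝ) ^ (-(1 + d)) + d * Real.exp 1 * ∑ p ∈ s, Real.log p.1 * (p.1 : ℝ) ^ (-(1 + d)) := by
      rw [Finset.sum_add_distrib, ← Finset.mul_sum]
    _ ≤ Sw w d + d * Real.exp 1 * ((1 / 2) * (1 / d + C)) := by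
      have := hT d hd0 hd1
      gcongr
      linarith
    _ ≤ Sw w d + Real.exp 1 * (1 + C) := by
      have e2 : d * Real.exp 1 * ((1 / 2) * (1 / d + C)) = Real.exp 1 * ((1 / 2) * (1 + d * C)) := by
        field_simp
      rw [e2]
      have : d * C ≤ 1 * C := by gcongr
      gcongr
      linarith

end SACB
namespace SACB
open Complex Metric Set

lemma cos_natAbs (n : ℤ) (k : ℕ) (t : ℝ) :
    Real.cos (2 * n * (k * t)) = Real.cos (((2 * n.natAbs * k : ℕ) : ℝ) * t) := by
  push_cast
  rw [Nat.cast_natAbs, Int.cast_abs]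
  rcases abs_choice (n : ℝ) with h | h <;> rw [h]
  · congr 1; ring
  · rw [← Real.cos_neg]; congr 1; ring

lemma Sw_sub {w : PA → ℝ} (hw : ∀ p, |w p| ≤ 1) {u v : ℝ} (hu : 0 < u) (hv : 0 < v) :
    HasSum (fun p : PA => w p * ((p.1 : ℝ) ^ (-(1 + u)) - (p.1 : ℝ) ^ (-(1 + v)))) (Sw w u - Sw w v) := by
  have := (summable_Sw hw hu).hasSum.sub (summable_Sw hw hv).hasSum
  refine this.congr_fun fun p => ?_
  ring

lemma W_eq (xp yp : ℕ → ℤ) (k : ℕ) {u v : ℝ} (hu : 0 < u) (hv : 0 < v) :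
    Sw (fun p => |Real.cos (k * ang xp yp p)|) u - Sw (fun p => |Real.cos (k * ang xp yp p)|) v =
    ∑' n : ℤ, fc n * (Sw (fun p => Real.cos ((2 * n.natAbs * k : ℕ) * ang xp yp p)) u -
      Sw (fun p => Real.cos ((2 * n.natAbs * k : ℕ) * ang xp yp p)) v) := by
  set a : PA → ℝ := fun p => (p.1 : ℝ) ^ (-(1 + u)) - (p.1 : ℝ) ^ (-(1 + v)) with ha
  have sa : Summable a := (summable_PA hu).sub (summable_PA hv)
  have hw : ∀ p : PA, |(fun p : PA => |Real.cos (k * ang xp yp p)|) p| ≤ 1 := fun p => by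
    simp only [abs_abs]; exact Real.abs_cos_le_one _
  have hw2 : ∀ n : ℤ, ∀ p : PA, |(fun p : PA => Real.cos ((2 * n.natAbs * k : ℕ) * ang xp yp p)) p| ≤ 1 :=
    fun n p => Real.abs_cos_le_one _
  rw [← (Sw_sub hw hu hv).tsum_eq]
  have e1 : ∀ p : PA, |Real.cos (k * ang xp yp p)| * a p =
      ∑' n : ℤ, fc n * (Real.cos ((2 * n.natAbs * k : ℕ) * ang xp yp p) * a p) := by
    intro p
    rw [← (abscos_fourier (k * ang xp yp p)).tsum_eq, ← tsum_mul_right]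
    refine tsum_congr fun n => ?_
    rw [cos_natAbs]; ring
  have e2 : ∀ n : ℤ, fc n * (Sw (fun p => Real.cos ((2 * n.natAbs * k : ℕ) * ang xp yp p)) u -
      Sw (fun p => Real.cos ((2 * n.natAbs * k : ℕ) * ang xp yp p)) v) =
      ∑' p : PA, fc n * (Real.cos ((2 * n.natAbs * k : ℕ) * ang xp yp p) * a p) := by
    intro n
    rw [← (Sw_sub (hw2 n) hu hv).tsum_eq, ← tsum_mul_left]
  rw [tsum_congr e1, tsum_congr e2]
  refine Summable.tsum_comm (f := fun (n : ℤ) (p : PA) => fc n * (Real.cos ((2 * n.natAbs * k : ℕ) * ang xp yp p) * a p)) ?_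
  have hs : Summable (fun z : ℤ × PA => |fc z.1| * |a z.2|) :=
    summable_fc.abs.mul_of_nonneg sa.abs (fun _ => abs_nonneg _) (fun _ => abs_nonneg _)
  refine Summable.of_norm_bounded hs fun z => ?_
  simp only [Function.uncurry]
  rw [Real.norm_eq_abs, abs_mul, abs_mul]
  refine mul_le_mul_of_nonneg_left ?_ (abs_nonneg _)
  exact mul_le_of_le_one_left (abs_nonneg _) (Real.abs_cos_le_one _)

lemma W_le : ∃ C : ℝ, ∀ xp yp : ℕ → ℤ, Good xp yp → ∀ k : ℕ, 4 ∣ k → 4 ≤ k →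
    ∀ u v : ℝ, 0 < u → u ≤ v → v ≤ 1 / 32 → Real.log k * v ≤ 1 →
    Sw (fun p => |Real.cos (k * ang xp yp p)|) u - Sw (fun p => |Real.cos (k * ang xp yp p)|) v ≤
      (2 / Real.pi) * (Sw (fun _ => 1) u - Sw (fun _ => 1) v) + C := by
  obtain ⟨K, hK, hS⟩ := S_diff
  have hZ := Real.summable_abs_int_rpow (show (1 : ℝ) < 3 / 2 by norm_num)
  refine ⟨∑' n : ℤ, 4 * K * |(n : ℝ)| ^ (-(3 / 2) : ℝ), ?_⟩
  intro xp yp hg k hk hk4 u v hu huv hv hkv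
  have hv0 : 0 < v := lt_of_lt_of_le hu huv
  rw [W_eq xp yp k hu hv0]
  set D : ℤ → ℝ := fun n => Sw (fun p => Real.cos ((2 * n.natAbs * k : ℕ) * ang xp yp p)) u -
      Sw (fun p => Real.cos ((2 * n.natAbs * k : ℕ) * ang xp yp p)) v with hD
  have hD0 : D 0 = Sw (fun _ => 1) u - Sw (fun _ => 1) v := by
    simp [hD]
  have hDn : ∀ n : ℤ, n ≠ 0 → |fc n * D n| ≤ 4 * K * |(n : ℝ)| ^ (-(3 / 2) : ℝ) := by
    intro n hn
    have hm : 1 ≤ n.natAbs := Nat.one_le_iff_ne_zero.mpr (Int.natAbs_ne_zero.mpr hn)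
    have hN : (1 : ℝ) ≤ |(n : ℝ)| := by
      rw [← Int.cast_abs, ← Nat.cast_natAbs]; exact_mod_cast hm
    have hN0 : 0 < |(n : ℝ)| := by linarith
    have h4 : 4 ≤ 2 * n.natAbs * k := by nlinarith
    have h1 := hS xp yp hg (2 * n.natAbs * k) (hk.mul_left _) h4 u v hu huv hv
    have hk0 : (0 : ℝ) < k := by exact_mod_cast (by omega : 0 < k)
    have hlog : Real.log ((2 * n.natAbs * k : ℕ) : ℝ) = Real.log 2 + Real.log |(n : ℝ)| + Real.log k := by
      push_cast
      rw [Nat.cast_natAbs, Int.cast_abs, Real.log_mul (by positivity) hk0.ne',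
        Real.log_mul (by norm_num) hN0.ne']
    have hl2 : Real.log 2 ≤ 1 := by have := Real.log_two_lt_d9; linarith
    have hln : Real.log |(n : ℝ)| ≤ |(n : ℝ)| ^ (1 / 2 : ℝ) / (1 / 2) :=
      Real.log_le_rpow_div hN0.le (by norm_num)
    have hl0 : 0 ≤ Real.log |(n : ℝ)| := Real.log_nonneg hN
    have hl20 : 0 ≤ Real.log 2 := Real.log_nonneg (by norm_num)
    have hr : 1 ≤ |(n : ℝ)| ^ (1 / 2 : ℝ) := Real.one_le_rpow hN (by norm_num)
    have hb : Real.log ((2 * n.natAbs * k : ℕ) : ℝ) * v ≤ 4 * |(n : ℝ)| ^ (1 / 2 : ℝ) := by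
      rw [hlog]
      have : (Real.log 2 + Real.log |(n : ℝ)|) * v ≤ (Real.log 2 + Real.log |(n : ℝ)|) * 1 :=
        mul_le_mul_of_nonneg_left (by linarith) (by linarith)
      nlinarith
    rw [abs_mul]
    have h2 : |D n| ≤ K * (4 * |(n : ℝ)| ^ (1 / 2 : ℝ)) := by
      refine h1.trans ?_
      rw [mul_assoc]
      exact mul_le_mul_of_nonneg_left hb hK
    refine (mul_le_mul (fc_le hn) h2 (abs_nonneg _) (by positivity)).trans (le_of_eq ?_)
    have e : |(n : ℝ)| ^ (-(3 / 2) : ℝ) = (1 / (n : ℝ) ^ 2) * |(n : ℝ)| ^ (1 / 2 : ℝ) := by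
      rw [show (-(3 / 2) : ℝ) = -2 + 1 / 2 by norm_num, Real.rpow_add hN0, Real.rpow_neg hN0.le, ← sq_abs, one_div]
      norm_num
    rw [e]; ring
  have hg0 : ∀ n : ℤ, 0 ≤ 4 * K * |(n : ℝ)| ^ (-(3 / 2) : ℝ) := fun n => by positivity
  have s1 : Summable (fun n : ℤ => 4 * K * |(n : ℝ)| ^ (-(3 / 2) : ℝ)) := hZ.mul_left _
  have s2 := hasSum_ite_eq (0 : ℤ) (2 / Real.pi * D 0)
  have s3 := hasSum_ite_eq (0 : ℤ) |2 / Real.pi * D 0|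
  have s4 : Summable (fun n => fc n * D n) := by
    refine Summable.of_norm_bounded (s1.add s3.summable) fun n => ?_
    rw [Real.norm_eq_abs]
    rcases eq_or_ne n 0 with rfl | hn
    · rw [if_pos rfl, fc_zero]
      linarith [hg0 0]
    · rw [if_neg hn, add_zero]; exact hDn n hn
  have := hasSum_le (fun n => ?_) s4.hasSum (s2.add s1.hasSum)
  · rw [hD0] at this; exact this
  · rcases eq_or_ne n 0 with rfl | hn
    · rw [if_pos rfl, fc_zero]
      linarith [hg0 0]
    · rw [if_neg hn, zero_add]; exact (le_abs_self _).trans (hDn n hn)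

end SACB
/-- Average bound on `|cos(k θ_p)|` over primes `p ≡ 1 (mod 4)`: for `4 ∣ k`, `k > 0`,
and `log k ≤ b √(log x)`, one has
`Σ_{p ≤ x, p ≡ 1 (4)} |cos(k θ_p)|/p ≤ (1/π) log log x + (1 - 2/π) log log k + C`,
where `θ_p` is the argument of a Gaussian prime factor `x_p + i y_p` of `p`. -/
theorem sum_abs_cos_over_primes_bound :
    ∃ b > (0 : ℝ), ∃ C : ℝ,
      ∀ xp yp : ℕ → ℤ,
        (∀ p : ℕ, p.Prime → p % 4 = 1 → (p : ℤ) = xp p ^ 2 + yp p ^ 2) →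
        ∀ k : ℕ, 0 < k → 4 ∣ k →
          ∀ x : ℝ, 16 ≤ x → Real.log k ≤ b * Real.sqrt (Real.log x) →
            ∑ p ∈ (Finset.range (⌊x⌋₊ + 1)).filter (fun p => p.Prime ∧ p % 4 = 1),
                |Real.cos ((k : ℝ) *
                  Complex.arg ((xp p : ℂ) + (yp p : ℂ) * Complex.I))| / (p : ℝ) ≤
              (1 / Real.pi) * Real.log (Real.log x) +
                (1 - 2 / Real.pi) * Real.log (Real.log k) + C := by
  obtain ⟨C1, hC1, h1⟩ := SACB.cutoff
  obtain ⟨C2, h2⟩ := SACB.W_le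
  obtain ⟨C3, hC3, h3⟩ := SACB.S0_diff
  obtain ⟨C4, hC4, h4⟩ := SACB.S0_le
  refine ⟨1 / 6, by norm_num, C1 + C2 + 2 / Real.pi * C3 + C4 +
    (1 / 2 - 1 / Real.pi) * Real.log 32, ?_⟩
  intro xp yp hg k hk hk4 x hx hlog
  have hk4' : 4 ≤ k := Nat.le_of_dvd hk hk4
  have hM := SACB.one_le_log hk4'
  have hex : Real.exp 1 ≤ x := by
    have := Real.exp_one_lt_d9
    linarith
  have hx0 : 0 < x := by linarith
  have hL : 1 ≤ Real.log x := by rwa [Real.le_log_iff_exp_le hx0]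
  set M := Real.log (k : ℝ) with hMdef
  set L := Real.log x with hLdef
  have hML : 36 * M ^ 2 ≤ L := by
    have e : (1 / 6 * Real.sqrt L) ^ 2 = L / 36 := by
      rw [mul_pow, Real.sq_sqrt (by linarith)]
      ring
    have : M ^ 2 ≤ (1 / 6 * Real.sqrt L) ^ 2 := pow_le_pow_left₀ (by linarith) hlog 2
    linarith
  have hM2 : 1 ≤ M ^ 2 := one_le_pow₀ hM
  have hM0 : 0 < M := by linarith
  have hL0 : 0 < L := by linarith
  set u : ℝ := 1 / L with hu
  set v : ℝ := 1 / (32 * M ^ 2) with hv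
  have hu0 : 0 < u := by positivity
  have hv0 : 0 < v := by positivity
  have huv : u ≤ v := one_div_le_one_div_of_le (by positivity) (by linarith)
  have hv1 : v ≤ 1 / 32 := one_div_le_one_div_of_le (by norm_num) (by linarith)
  have hMv : M * v ≤ 1 := by
    rw [hv, mul_one_div, div_le_one (by positivity)]
    nlinarith
  set w : SACB.PA → ℝ := fun p => |Real.cos (k * SACB.ang xp yp p)| with hw
  have a1 := h1 w (fun p => abs_nonneg _) (fun p => Real.abs_cos_le_one _) x hex
    ((Finset.range (⌊x⌋₊ + 1)).subtype (fun p => p.Prime ∧ p % 4 = 1)) (by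
      intro p hp
      rw [Finset.mem_subtype, Finset.mem_range] at hp
      exact (Nat.le_floor_iff hx0.le).mp (by omega))
  have a2 := h2 xp yp hg k hk4 hk4' u v hu0 huv hv1 hMv
  have a3 := h3 u v hu0 huv (by linarith)
  have a4 := h4 v hv0 (by linarith)
  have a5 : SACB.Sw w v ≤ SACB.Sw (fun _ => 1) v := by
    refine Summable.tsum_le_tsum (fun p => ?_)
      (SACB.summable_Sw (fun p => ?_) hv0) (SACB.summable_Sw (fun p => ?_) hv0)
    · exact mul_le_mul_of_nonneg_right (Real.abs_cos_le_one _) (by positivity)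
    · simp only [hw, abs_abs]
      exact Real.abs_cos_le_one _
    · simp
  have a6 := mul_le_mul_of_nonneg_left a3 (show 0 ≤ 2 / Real.pi by positivity)
  have lu : Real.log u = -Real.log L := by rw [hu, one_div, Real.log_inv]
  have lv : Real.log v = -(Real.log 32 + 2 * Real.log M) := by
    rw [hv, one_div, Real.log_inv, Real.log_mul (by norm_num) (by positivity), Real.log_pow]
    norm_num
  have key : ∑ p ∈ (Finset.range (⌊x⌋₊ + 1)).subtype (fun p => p.Prime ∧ p % 4 = 1),
      w p / ((p : ℕ) : ℝ) =
      ∑ p ∈ (Finset.range (⌊x⌋₊ + 1)).filter (fun p => p.Prime ∧ p % 4 = 1),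
                |Real.cos ((k : ℝ) *
                  Complex.arg ((xp p : ℂ) + (yp p : ℂ) * Complex.I))| / (p : ℝ) :=
    Finset.sum_subtype_eq_sum_filter (s := Finset.range (⌊x⌋₊ + 1))
      (p := fun p => p.Prime ∧ p % 4 = 1) (fun p : ℕ => |Real.cos ((k : ℝ) *
                  Complex.arg ((xp p : ℂ) + (yp p : ℂ) * Complex.I))| / (p : ℝ))
  rw [← key]
  rw [lu, lv] at a6
  rw [lv] at a4
  have e : 2 / Real.pi * (1 / 2 * (-(Real.log 32 + 2 * Real.log M) - -Real.log L) + C3) =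
      1 / Real.pi * Real.log L - 2 / Real.pi * Real.log M - 1 / Real.pi * Real.log 32
        + 2 / Real.pi * C3 := by ring
  rw [e] at a6
  linarith
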